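/- In the Calderón–Zygmund decomposition for Sobolev functions on ℝⁿ at height α with exponent q (where 1 ≤ q < ∞, f ∈ C_c^∞(ℝⁿ), α > 0, f = g + Σ_i b_i with balls B_i, functions b_i supported in B_i satisfying ∫_{B_i}|∇b_i|^q ≤ Cα^q|B_i|, Σ_i|B_i| ≤ Cα^{-q}∫|∇f|^q, bounded overlap Σ_i 1_{B_i} ≤ N, and |∇g| ≤ Cα a.e.), the functions g and b_i can moreover be chosen so that Σ_i ∇b_i converges in L^q(ℝⁿ) with ‖Σ_i |∇b_i|‖_q ≤ C‖|∇f|‖_q, and consequently ‖|∇g|‖_q ≤ (C+1)·‖|∇f|‖_q, where C depends only on n and q. -/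

import Mathlib

open MeasureTheory Metric ENNReal

/-!
Call a ball bad if the mean of `|∇f| ^ q` over it is at least `α ^ q`, and let `ρ x` be the supremum
over the bad balls `B (z, r)` of `2 r - |x - z|` (and `0`). This stopping scale is `1`-Lipschitz,
balls `B (x, r)` with `r ≥ ρ x` have mean at most `α ^ q`, and by the Vitali covering lemma
`α ^ q |{ρ > 0}|` is at most a multiple of `∫ |∇f| ^ q`. Since `ρ` is Lipschitz, it is a scale for
Whitney balls of radius `ρ / 10`, with overlaps bounded in terms of the dimension and a partition of
unity `χ i` whose gradients are of size `1 / ρ`. Take `b i = χ i (f - f_i)`, where `f_i` is the mean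
of `f` over the `i`-th ball: the Poincaré inequality bounds `∇(b i)` in `L ^ q` by `∇f` on that
ball, and these bounds add up because the overlaps are bounded.

As `∇f` is uniformly continuous it suffices to treat the points where `ρ > ε`, hence finitely many
balls: where `ρ ≤ ε`, the gradient oscillates by at most `α` on a ball of radius `ε` whose mean is
under control, so `|∇f| ≤ 2 α` already. In the region `ρ > ε` the `χ i` sum to `1`, so
`∇g = ∑ i, ∇(χ i) f_i`, and neighbouring means differ by at most a multiple of `ρ α`.
-/

open Module (finrank)

namespace CalderonZygmund

/-! ### Averages -/

section Averages

variable {X : Type*} [MeasurableSpace X] {μ : Measure X} {q : ℝ}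

lemma rpow_lintegral_le_lintegral_rpow [IsProbabilityMeasure μ] (hq : 1 ≤ q) {h : X → ℝ≥0∞}
    (hh : AEMeasurable h μ) : (∫⁻ x, h x ∂μ) ^ q ≤ ∫⁻ x, h x ^ q ∂μ := by
  have hq0 : 0 < q := one_pos.trans_le hq
  have h_norms := eLpNorm'_le_eLpNorm'_of_exponent_le one_pos hq μ hh.aestronglyMeasurable
  simp only [eLpNorm', enorm_eq_self, ENNReal.rpow_one, div_one] at h_norms
  rwa [← ENNReal.le_rpow_inv_iff hq0, ← one_div]

variable {G : Type*} [NormedAddCommGroup G] [NormedSpace ℝ G] {s : Set X}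

lemma enorm_setAverage_rpow_le (hq : 1 ≤ q) (hs₀ : μ s ≠ 0) (hs : μ s ≠ ∞) {h : X → G}
    (hh : AEStronglyMeasurable h (μ.restrict s)) :
    ‖⨍ x in s, h x ∂μ‖ₑ ^ q ≤ ⨍⁻ x in s, ‖h x‖ₑ ^ q ∂μ := by
  have : Fact (μ s < ∞) := ⟨hs.lt_top⟩
  have : NeZero (μ.restrict s) := ⟨by rwa [Ne, Measure.restrict_eq_zero]⟩
  calc ‖⨍ x in s, h x ∂μ‖ₑ ^ q
      ≤ (⨍⁻ x in s, ‖h x‖ₑ ∂μ) ^ q := by gcongr; exact enorm_integral_le_lintegral_enorm _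
    _ ≤ ⨍⁻ x in s, ‖h x‖ₑ ^ q ∂μ :=
      rpow_lintegral_le_lintegral_rpow hq (hh.enorm.smul_measure _)

variable [CompleteSpace G]

lemma setAverage_const_sub (hs₀ : μ s ≠ 0) (hs : μ s ≠ ∞) {f : X → G} (hf : IntegrableOn f s μ)
    (a : G) : ⨍ x in s, (a - f x) ∂μ = a - ⨍ x in s, f x ∂μ := by
  have hsr : μ.real s ≠ 0 := (ENNReal.toReal_pos hs₀ hs).ne'
  have ha : IntegrableOn (fun _ => a) s μ := integrableOn_const hs
  rw [setAverage_eq, setAverage_eq, integral_sub ha hf, setIntegral_const, smul_sub,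
    inv_smul_smul₀ hsr]

lemma enorm_sub_setAverage_rpow_le (hq : 1 ≤ q) (hs₀ : μ s ≠ 0) (hs : μ s ≠ ∞) {f : X → G}
    (hf : IntegrableOn f s μ) (a : G) :
    ‖a - ⨍ x in s, f x ∂μ‖ₑ ^ q ≤ ⨍⁻ x in s, ‖a - f x‖ₑ ^ q ∂μ := by
  rw [← setAverage_const_sub hs₀ hs hf]
  exact enorm_setAverage_rpow_le hq hs₀ hs (aestronglyMeasurable_const.sub hf.1)

lemma norm_sub_setAverage_le (hs₀ : μ s ≠ 0) (hs : μ s ≠ ∞) (hsm : MeasurableSet s) {f : X → G}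
    (hf : IntegrableOn f s μ) {a : G} {L : ℝ} (hL : ∀ x ∈ s, ‖a - f x‖ ≤ L) :
    ‖a - ⨍ x in s, f x ∂μ‖ ≤ L := by
  have hmem : ⨍ x in s, f x ∂μ ∈ closedBall a L :=
    (convex_closedBall a L).set_average_mem isClosed_closedBall hs₀ hs
      ((ae_restrict_iff' hsm).2 (.of_forall fun x hx => by
        simpa only [mem_closedBall, dist_comm, dist_eq_norm] using hL x hx)) hf
  rwa [mem_closedBall, dist_comm, dist_eq_norm] at hmem

end Averages

lemma integrableOn_of_continuous_of_isBounded {X G : Type*} [MetricSpace X] [ProperSpace X]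
    [MeasurableSpace X] [OpensMeasurableSpace X] (μ : Measure X) [IsLocallyFiniteMeasure μ]
    [NormedAddCommGroup G] {f : X → G} (hf : Continuous f) {s : Set X}
    (hs : Bornology.IsBounded s) : IntegrableOn f s μ :=
  (hf.continuousOn.integrableOn_compact hs.isCompact_closure).mono_set subset_closure

/-! ### The Poincaré inequality -/

section Segment

variable {E : Type*} [NormedAddCommGroup E] [NormedSpace ℝ E]
  {G : Type*} [NormedAddCommGroup G] [NormedSpace ℝ G] [CompleteSpace G]

lemma enorm_sub_le_lintegral_fderiv {f : E → G} (hf : ContDiff ℝ 1 f) (x y : E) :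
    ‖f x - f y‖ₑ ≤
      ‖x - y‖ₑ * ∫⁻ t in Set.Icc (0 : ℝ) 1, ‖fderiv ℝ f ((1 - t) • x + t • y)‖ₑ := by
  have : Continuous (fderiv ℝ f) := hf.continuous_fderiv one_ne_zero
  have hderiv (t : ℝ) : HasDerivAt (fun t : ℝ => f ((1 - t) • x + t • y))
      (fderiv ℝ f ((1 - t) • x + t • y) (y - x)) t := by
    have hsegment : HasDerivAt (fun t : ℝ => (1 - t) • x + t • y) (y - x) t := by
      have := (((hasDerivAt_id t).const_sub 1).smul_const x).add ((hasDerivAt_id t).smul_const y)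
      convert! this using 1
      simp only [neg_smul, one_smul, sub_eq_neg_add]
    exact (hf.differentiable one_ne_zero _).hasFDerivAt.comp_hasDerivAt t hsegment
  have hFTC := intervalIntegral.integral_eq_sub_of_hasDerivAt (a := 0) (b := 1)
    (fun t _ => hderiv t) (Continuous.intervalIntegrable (by fun_prop) _ _)
  simp only [sub_self, zero_smul, one_smul, zero_add, sub_zero, add_zero] at hFTC
  rw [intervalIntegral.integral_of_le zero_le_one, ← integral_Icc_eq_integral_Ioc] at hFTC
  rw [enorm_sub_rev (f x), ← hFTC, enorm_sub_rev x, ← lintegral_const_mul' _ _ enorm_ne_top]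
  refine (enorm_integral_le_lintegral_enorm _).trans (lintegral_mono fun t => ?_)
  rw [mul_comm]
  exact ContinuousLinearMap.le_opENorm _ _

lemma enorm_sub_rpow_le_lintegral_fderiv {q : ℝ} (hq : 1 ≤ q) {f : E → G}
    (hf : ContDiff ℝ 1 f) (x y : E) :
    ‖f x - f y‖ₑ ^ q ≤ ‖x - y‖ₑ ^ q *
      ∫⁻ t in Set.Icc (0 : ℝ) 1, ‖fderiv ℝ f ((1 - t) • x + t • y)‖ₑ ^ q := by
  have hq0 : 0 ≤ q := zero_le_one.trans hq
  have : Continuous (fderiv ℝ f) := hf.continuous_fderiv one_ne_zero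
  have : IsProbabilityMeasure (volume.restrict (Set.Icc (0 : ℝ) 1)) := ⟨by simp⟩
  refine (ENNReal.rpow_le_rpow (enorm_sub_le_lintegral_fderiv hf x y) hq0).trans ?_
  rw [ENNReal.mul_rpow_of_nonneg _ _ hq0]
  gcongr
  exact rpow_lintegral_le_lintegral_rpow hq (Continuous.measurable (by fun_prop)).aemeasurable

end Segment

section Poincare

variable {E : Type*} [NormedAddCommGroup E] [NormedSpace ℝ E] [FiniteDimensional ℝ E]
  [MeasurableSpace E] [BorelSpace E] (μ : Measure E) [μ.IsAddHaarMeasure]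
  {s : Set E} {F : E → ℝ≥0∞}

lemma lintegral_comp_add_smul_le (hF : Measurable F) (v : E) {t : ℝ} (ht : 1 / 2 ≤ t) :
    ∫⁻ y, F (v + t • y) ∂μ ≤ 2 ^ finrank ℝ E * ∫⁻ y, F y ∂μ := by
  have ht0 : 0 < t := by linarith
  rw [← lintegral_map (f := fun y => F (v + y)) (g := fun y => t • y) (by fun_prop) (by fun_prop),
    Measure.map_addHaar_smul _ ht0.ne', lintegral_smul_measure, smul_eq_mul,
    lintegral_add_left_eq_self F v, abs_of_pos (by positivity), ← inv_pow,
    ENNReal.ofReal_pow (by positivity)]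
  gcongr
  rw [← ENNReal.ofReal_ofNat 2]
  exact ENNReal.ofReal_le_ofReal (inv_le_of_inv_le₀ two_pos (by simpa using ht))

lemma setLIntegral_setLIntegral_comp_segment_le_of_half_le (hs : MeasurableSet s)
    (hsc : Convex ℝ s) (hF : Measurable F) {t : ℝ} (ht : t ∈ Set.Icc (1 / 2 : ℝ) 1) :
    ∫⁻ x in s, ∫⁻ y in s, F ((1 - t) • x + t • y) ∂μ ∂μ ≤
      2 ^ finrank ℝ E * (μ s * ∫⁻ x in s, F x ∂μ) := by
  have ht0 : 0 ≤ t := by linarith [ht.1]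
  calc ∫⁻ x in s, ∫⁻ y in s, F ((1 - t) • x + t • y) ∂μ ∂μ
      = ∫⁻ x in s, ∫⁻ y in s, s.indicator F ((1 - t) • x + t • y) ∂μ ∂μ := by
        refine setLIntegral_congr_fun hs fun x hx => setLIntegral_congr_fun hs fun y hy => ?_
        rw [Set.indicator_of_mem (hsc hx hy (sub_nonneg.2 ht.2) ht0 (sub_add_cancel 1 t))]
    _ ≤ ∫⁻ _ in s, 2 ^ finrank ℝ E * ∫⁻ y, s.indicator F y ∂μ ∂μ := by
        gcongr with x
        exact (setLIntegral_le_lintegral _ _).trans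
          (lintegral_comp_add_smul_le μ (hF.indicator hs) _ ht.1)
    _ = 2 ^ finrank ℝ E * (μ s * ∫⁻ x in s, F x ∂μ) := by
        rw [lintegral_indicator hs, lintegral_const, Measure.restrict_apply_univ]
        ring

/- One of the coefficients `t` and `1 - t` is at least `1 / 2`, so that the change of variables in
the corresponding variable costs at most `2 ^ finrank ℝ E`. -/
lemma setLIntegral_setLIntegral_comp_segment_le (hs : MeasurableSet s) (hsc : Convex ℝ s)
    (hF : Measurable F) {t : ℝ} (ht : t ∈ Set.Icc (0 : ℝ) 1) :
    ∫⁻ x in s, ∫⁻ y in s, F ((1 - t) • x + t • y) ∂μ ∂μ ≤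
      2 ^ finrank ℝ E * (μ s * ∫⁻ x in s, F x ∂μ) := by
  rcases le_total (1 / 2) t with h | h
  · exact setLIntegral_setLIntegral_comp_segment_le_of_half_le μ hs hsc hF ⟨h, ht.2⟩
  · rw [lintegral_lintegral_swap (by fun_prop)]
    simpa only [_root_.sub_sub_cancel, add_comm] using
      setLIntegral_setLIntegral_comp_segment_le_of_half_le μ hs hsc hF (t := 1 - t)
        ⟨by linarith, by linarith [ht.1]⟩

lemma setLIntegral_setLIntegral_lintegral_comp_segment_le (hs : MeasurableSet s)
    (hsc : Convex ℝ s) (hF : Measurable F) :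
    ∫⁻ x in s, ∫⁻ y in s, ∫⁻ t in Set.Icc (0 : ℝ) 1, F ((1 - t) • x + t • y) ∂volume ∂μ ∂μ ≤
      2 ^ finrank ℝ E * (μ s * ∫⁻ x in s, F x ∂μ) := by
  have hswap (x : E) :
      ∫⁻ y in s, ∫⁻ t in Set.Icc (0 : ℝ) 1, F ((1 - t) • x + t • y) ∂volume ∂μ =
        ∫⁻ t in Set.Icc (0 : ℝ) 1, ∫⁻ y in s, F ((1 - t) • x + t • y) ∂μ :=
    lintegral_lintegral_swap (by fun_prop)
  have hmeas : Measurable fun p : E × ℝ => ∫⁻ y in s, F ((1 - p.2) • p.1 + p.2 • y) ∂μ :=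
    Measurable.lintegral_prod_right' (f := fun p : (E × ℝ) × E =>
      F ((1 - p.1.2) • p.1.1 + p.1.2 • p.2)) (by fun_prop)
  simp_rw [hswap]
  rw [lintegral_lintegral_swap hmeas.aemeasurable]
  refine (setLIntegral_mono' measurableSet_Icc fun t ht =>
    setLIntegral_setLIntegral_comp_segment_le μ hs hsc hF ht).trans_eq ?_
  rw [setLIntegral_const, Real.volume_Icc, sub_zero, ENNReal.ofReal_one, mul_one]

variable {G : Type*} [NormedAddCommGroup G] [NormedSpace ℝ G] [CompleteSpace G] {f : E → G} {q : ℝ}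

theorem poincare_inequality (hq : 1 ≤ q) (hf : ContDiff ℝ 1 f) (hs : MeasurableSet s)
    (hsc : Convex ℝ s) (hsb : Bornology.IsBounded s) :
    ∫⁻ x in s, ‖f x - ⨍ y in s, f y ∂μ‖ₑ ^ q ∂μ ≤
      2 ^ finrank ℝ E * ediam s ^ q * ∫⁻ x in s, ‖fderiv ℝ f x‖ₑ ^ q ∂μ := by
  have hq0 : 0 ≤ q := zero_le_one.trans hq
  have : Continuous (fderiv ℝ f) := hf.continuous_fderiv one_ne_zero
  rcases eq_or_ne (μ s) 0 with hs₀ | hs₀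
  · simp [Measure.restrict_eq_zero.2 hs₀]
  have hs_top : μ s ≠ ∞ := hsb.measure_lt_top.ne
  have hfs := integrableOn_of_continuous_of_isBounded μ hf.continuous hsb
  have hdiam : ediam s ^ q ≠ ∞ := ENNReal.rpow_ne_top_of_nonneg hq0 hsb.ediam_ne_top
  calc ∫⁻ x in s, ‖f x - ⨍ y in s, f y ∂μ‖ₑ ^ q ∂μ
      ≤ ∫⁻ x in s, (μ s)⁻¹ * ∫⁻ y in s, ‖f x - f y‖ₑ ^ q ∂μ ∂μ := by
        gcongr with x
        rw [mul_comm, ← div_eq_mul_inv, ← setLAverage_eq]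
        exact enorm_sub_setAverage_rpow_le hq hs₀ hs_top hfs (f x)
    _ ≤ ∫⁻ x in s, (μ s)⁻¹ * ∫⁻ y in s, ediam s ^ q *
          ∫⁻ t in Set.Icc (0 : ℝ) 1, ‖fderiv ℝ f ((1 - t) • x + t • y)‖ₑ ^ q ∂volume ∂μ ∂μ := by
        refine setLIntegral_mono' hs fun x hx => ?_
        gcongr _ * ?_
        refine setLIntegral_mono' hs fun y hy => ?_
        refine (enorm_sub_rpow_le_lintegral_fderiv hq hf x y).trans ?_
        gcongr
        rw [← edist_eq_enorm_sub]
        exact edist_le_ediam_of_mem hx hy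
    _ = (μ s)⁻¹ * (ediam s ^ q * ∫⁻ x in s, ∫⁻ y in s, ∫⁻ t in Set.Icc (0 : ℝ) 1,
          ‖fderiv ℝ f ((1 - t) • x + t • y)‖ₑ ^ q ∂volume ∂μ ∂μ) := by
        simp_rw [lintegral_const_mul' _ _ (ENNReal.inv_ne_top.2 hs₀),
          lintegral_const_mul' _ _ hdiam]
    _ ≤ (μ s)⁻¹ * (ediam s ^ q *
          (2 ^ finrank ℝ E * (μ s * ∫⁻ x in s, ‖fderiv ℝ f x‖ₑ ^ q ∂μ))) := by
        gcongr
        exact setLIntegral_setLIntegral_lintegral_comp_segment_le μ hs hsc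
          (Continuous.measurable (by fun_prop) : Measurable fun x => ‖fderiv ℝ f x‖ₑ ^ q)
    _ = (μ s)⁻¹ * μ s * (2 ^ finrank ℝ E * ediam s ^ q *
          ∫⁻ x in s, ‖fderiv ℝ f x‖ₑ ^ q ∂μ) := by ring
    _ = 2 ^ finrank ℝ E * ediam s ^ q * ∫⁻ x in s, ‖fderiv ℝ f x‖ₑ ^ q ∂μ := by
        rw [ENNReal.inv_mul_cancel hs₀ hs_top, one_mul]

/-! ### Averages over comparable balls -/

lemma addHaar_ball_mul_center (x y : E) {k : ℝ} (hk : 0 < k) (r : ℝ) :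
    μ (ball x (k * r)) = ENNReal.ofReal k ^ finrank ℝ E * μ (ball y r) := by
  rw [Measure.addHaar_ball_mul_of_pos μ x hk, Measure.addHaar_ball_center μ y,
    ENNReal.ofReal_pow hk.le]

lemma laverage_ball_le_of_subset (F : E → ℝ≥0∞) {w z : E} {k r : ℝ} (hk : 0 < k) (hr : 0 < r)
    (hsub : ball w r ⊆ ball z (k * r)) :
    ⨍⁻ x in ball w r, F x ∂μ ≤ ENNReal.ofReal k ^ finrank ℝ E * ⨍⁻ x in ball z (k * r), F x ∂μ := by
  have hw₀ : μ (ball w r) ≠ 0 := (measure_ball_pos μ w hr).ne'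
  rw [setLAverage_eq, ENNReal.div_le_iff hw₀ measure_ball_lt_top.ne, mul_right_comm,
    ← addHaar_ball_mul_center μ z w hk, measure_mul_setLAverage F measure_ball_lt_top.ne]
  exact lintegral_mono_set hsub

lemma poincare_inequality_ball (hq : 1 ≤ q) (hf : ContDiff ℝ 1 f) (z : E) (r : ℝ) :
    ∫⁻ x in ball z r, ‖f x - ⨍ y in ball z r, f y ∂μ‖ₑ ^ q ∂μ ≤
      2 ^ finrank ℝ E * ENNReal.ofReal (2 * r) ^ q *
        ∫⁻ x in ball z r, ‖fderiv ℝ f x‖ₑ ^ q ∂μ := by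
  refine (poincare_inequality μ hq hf measurableSet_ball (convex_ball z r) isBounded_ball).trans ?_
  gcongr
  refine ediam_le fun x hx y hy => ?_
  rw [edist_dist]
  gcongr
  linarith [dist_triangle_right x y z, mem_ball.1 hx, mem_ball.1 hy]

lemma norm_average_ball_sub_le (hq : 1 ≤ q) (hf : ContDiff ℝ 1 f) {w z : E} {k r α : ℝ}
    (hk : 1 ≤ k) (hr : 0 < r) (hα : 0 ≤ α) (hsub : ball w r ⊆ ball z (k * r))
    (hF : ⨍⁻ x in ball z (k * r), ‖fderiv ℝ f x‖ₑ ^ q ∂μ ≤ ENNReal.ofReal α ^ q) :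
    ‖(⨍ y in ball z (k * r), f y ∂μ) - ⨍ y in ball w r, f y ∂μ‖ ≤
      (2 * k) ^ finrank ℝ E * (2 * (k * r) * α) := by
  have hq0 : 0 < q := one_pos.trans_le hq
  have hk0 : 0 < k := one_pos.trans_le hk
  set m := ⨍ y in ball z (k * r), f y ∂μ
  have hone : (1 : ℝ≥0∞) ≤ ENNReal.ofReal (2 * k) ^ finrank ℝ E :=
    one_le_pow₀ (ENNReal.one_le_ofReal.2 (by linarith))
  rw [← ENNReal.ofReal_le_ofReal_iff (by positivity), ofReal_norm,
    ← ENNReal.rpow_le_rpow_iff hq0]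
  calc ‖m - ⨍ y in ball w r, f y ∂μ‖ₑ ^ q
      ≤ ⨍⁻ y in ball w r, ‖m - f y‖ₑ ^ q ∂μ :=
        enorm_sub_setAverage_rpow_le hq (measure_ball_pos μ w hr).ne' measure_ball_lt_top.ne
          (integrableOn_of_continuous_of_isBounded μ hf.continuous isBounded_ball) m
    _ ≤ ENNReal.ofReal k ^ finrank ℝ E * ⨍⁻ y in ball z (k * r), ‖f y - m‖ₑ ^ q ∂μ := by
        simp_rw [enorm_sub_rev m]
        exact laverage_ball_le_of_subset μ _ hk0 hr hsub
    _ ≤ ENNReal.ofReal k ^ finrank ℝ E * (2 ^ finrank ℝ E * ENNReal.ofReal (2 * (k * r)) ^ q *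
          ⨍⁻ y in ball z (k * r), ‖fderiv ℝ f y‖ₑ ^ q ∂μ) := by
        rw [setLAverage_eq, setLAverage_eq, ← mul_div_assoc (2 ^ finrank ℝ E * _)]
        gcongr
        exact poincare_inequality_ball μ hq hf z (k * r)
    _ ≤ ENNReal.ofReal k ^ finrank ℝ E * (2 ^ finrank ℝ E * ENNReal.ofReal (2 * (k * r)) ^ q *
          ENNReal.ofReal α ^ q) := by gcongr
    _ = ENNReal.ofReal (2 * k) ^ finrank ℝ E * ENNReal.ofReal (2 * (k * r) * α) ^ q := by
        rw [ENNReal.ofReal_mul (p := 2 * (k * r)) (by positivity),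
          ENNReal.mul_rpow_of_nonneg _ _ hq0.le, ENNReal.ofReal_mul (q := k) two_pos.le, mul_pow,
          ENNReal.ofReal_ofNat]
        ring
    _ ≤ ENNReal.ofReal ((2 * k) ^ finrank ℝ E * (2 * (k * r) * α)) ^ q := by
        rw [ENNReal.ofReal_mul (p := (2 * k) ^ finrank ℝ E) (by positivity),
          ENNReal.mul_rpow_of_nonneg _ _ hq0.le, ENNReal.ofReal_pow (by positivity)]
        gcongr
        exact ENNReal.le_rpow_self_of_one_le hone hq

end Poincare

/-! ### The stopping scale -/

section StoppingScale

variable {E : Type*} [NormedAddCommGroup E] [MeasurableSpace E]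

/-- The bad balls of `F` at height `A`: the pairs `(y, r)` such that the average of `F` over
`ball y r` is at least `A`. -/
def badBalls (μ : Measure E) (F : E → ℝ≥0∞) (A : ℝ≥0∞) : Set (E × ℝ) :=
  {p | 0 < p.2 ∧ A ≤ ⨍⁻ y in ball p.1 p.2, F y ∂μ}

/-- The stopping scale of `F` at height `A`: at `x`, the supremum of `(2 r - |x - y|)⁺` over all
bad balls `ball y r`. It is positive exactly on the union of the doubled bad balls and, unlike the
largest radius of a bad ball around `x`, it is Lipschitz. -/
noncomputable def stoppingScale (μ : Measure E) (F : E → ℝ≥0∞) (A : ℝ≥0∞) (x : E) : ℝ :=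
  ⨆ p : badBalls μ F A, max (2 * p.1.2 - dist x p.1.1) 0

lemma stoppingScale_nonneg (μ : Measure E) (F : E → ℝ≥0∞) (A : ℝ≥0∞) (x : E) :
    0 ≤ stoppingScale μ F A x :=
  Real.iSup_nonneg fun _ => le_max_right _ _

variable {μ : Measure E} {F : E → ℝ≥0∞} {A : ℝ≥0∞}

lemma exists_dist_lt_of_stoppingScale_pos {x : E} (hx : 0 < stoppingScale μ F A x) :
    ∃ p ∈ badBalls μ F A, dist x p.1 < 2 * p.2 := by
  by_contra! hfar
  refine hx.not_ge (Real.iSup_le (fun p => max_le ?_ le_rfl) le_rfl)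
  linarith [hfar p.1 p.2]

lemma mul_measure_ball_le_of_mem_badBalls {p : E × ℝ} (hp : p ∈ badBalls μ F A) :
    A * μ (ball p.1 p.2) ≤ ∫⁻ y in ball p.1 p.2, F y ∂μ :=
  ENNReal.mul_le_of_le_div (hp.2.trans_eq (setLAverage_eq μ F _))

variable [NormedSpace ℝ E] [FiniteDimensional ℝ E] [BorelSpace E] [μ.IsAddHaarMeasure]

lemma exists_radius_le_of_mem_badBalls [Nontrivial E] (hA : A ≠ 0) (hF : ∫⁻ x, F x ∂μ ≠ ∞) :
    ∃ R : ℝ, ∀ p ∈ badBalls μ F A, p.2 ≤ R := by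
  have hV₀ : μ (ball 0 1) ≠ 0 := (measure_ball_pos μ (0 : E) one_pos).ne'
  set T := (∫⁻ x, F x ∂μ) / A / μ (ball 0 1)
  have hT : T ≠ ∞ := ENNReal.div_ne_top (ENNReal.div_ne_top hF hA) hV₀
  refine ⟨max 1 T.toReal, fun p hp => ?_⟩
  rcases le_total p.2 1 with hle | hle
  · exact le_max_of_le_left hle
  · have hpow : ENNReal.ofReal (p.2 ^ finrank ℝ E) ≤ T := by
      rw [ENNReal.le_div_iff_mul_le (.inl hV₀) (.inl measure_ball_lt_top.ne),
        ENNReal.le_div_iff_mul_le (.inl hA) (.inr hF), ENNReal.ofReal_pow hp.1.le,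
        ← addHaar_ball_mul_center μ p.1 0 hp.1, mul_one, mul_comm]
      exact (mul_measure_ball_le_of_mem_badBalls hp).trans (setLIntegral_le_lintegral _ _)
    exact le_max_of_le_right ((le_self_pow₀ hle Module.finrank_pos.ne').trans
      ((ENNReal.ofReal_le_iff_le_toReal hT).1 hpow))

variable [Nontrivial E] (hA : A ≠ 0) (hF : ∫⁻ x, F x ∂μ ≠ ∞)

include hA hF

lemma exists_stoppingScale_le : ∃ R : ℝ, ∀ x, stoppingScale μ F A x ≤ R := by
  obtain ⟨R, hR⟩ := exists_radius_le_of_mem_badBalls hA hF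
  refine ⟨max (2 * R) 0, fun x => Real.iSup_le (fun p => ?_) (le_max_right _ _)⟩
  gcongr
  linarith [hR p.1 p.2, dist_nonneg (x := x) (y := p.1.1)]

lemma two_mul_sub_dist_le_stoppingScale {p : E × ℝ} (hp : p ∈ badBalls μ F A) (x : E) :
    2 * p.2 - dist x p.1 ≤ stoppingScale μ F A x := by
  obtain ⟨R, hR⟩ := exists_radius_le_of_mem_badBalls hA hF
  have hbdd : BddAbove (Set.range fun p : badBalls μ F A => max (2 * p.1.2 - dist x p.1.1) 0) := by
    refine ⟨max (2 * R) 0, Set.forall_mem_range.2 fun p => ?_⟩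
    gcongr
    linarith [hR p.1 p.2, dist_nonneg (x := x) (y := p.1.1)]
  exact (le_max_left _ _).trans (le_ciSup hbdd ⟨p, hp⟩)

lemma lipschitzWith_stoppingScale : LipschitzWith 1 (stoppingScale μ F A) := by
  refine LipschitzWith.of_le_add fun x y => ?_
  have hnonneg : 0 ≤ stoppingScale μ F A y + dist x y :=
    add_nonneg (stoppingScale_nonneg μ F A y) dist_nonneg
  refine Real.iSup_le (fun p => max_le ?_ hnonneg) hnonneg
  linarith [two_mul_sub_dist_le_stoppingScale hA hF p.2 y, dist_triangle_left y p.1.1 x]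

lemma laverage_ball_le_of_stoppingScale_le {x : E} {r : ℝ} (hr : 0 < r)
    (hx : stoppingScale μ F A x ≤ r) : ⨍⁻ y in ball x r, F y ∂μ ≤ A := by
  by_contra! hlt
  have := two_mul_sub_dist_le_stoppingScale hA hF (p := (x, r)) ⟨hr, hlt.le⟩ x
  simp only [dist_self] at this
  linarith

lemma exists_disjoint_badBalls_covering_stoppingScale_pos :
    ∃ u ⊆ badBalls μ F A, u.Countable ∧ u.PairwiseDisjoint (fun p => ball p.1 p.2) ∧
      {x | 0 < stoppingScale μ F A x} ⊆ ⋃ p ∈ u, closedBall p.1 (8 * p.2) := by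
  obtain ⟨R, hR⟩ := exists_radius_le_of_mem_badBalls hA hF
  obtain ⟨u, hu, hdisj, hcov⟩ := Vitali.exists_disjoint_subfamily_covering_enlargement_closedBall
    (badBalls μ F A) Prod.fst (fun p => 2 * p.2) (2 * R) (fun p hp => by linarith [hR p hp]) 4
    (by norm_num)
  have hdisj' : u.PairwiseDisjoint fun p => ball p.1 p.2 := hdisj.mono_on fun p hp =>
    ball_subset_closedBall.trans (closedBall_subset_closedBall (by linarith [(hu hp).1]))
  refine ⟨u, hu, hdisj'.countable_of_isOpen (fun _ _ => isOpen_ball) fun p hp =>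
    nonempty_ball.2 (hu hp).1, hdisj', fun x hx => ?_⟩
  obtain ⟨p, hp, hxp⟩ := exists_dist_lt_of_stoppingScale_pos hx
  obtain ⟨p', hp', hsub⟩ := hcov p hp
  refine Set.mem_biUnion hp' (closedBall_subset_closedBall ?_ (hsub (mem_closedBall.2 hxp.le)))
  linarith

theorem mul_measure_stoppingScale_pos_le :
    A * μ {x | 0 < stoppingScale μ F A x} ≤ 8 ^ finrank ℝ E * ∫⁻ x, F x ∂μ := by
  obtain ⟨u, hu, hcount, hdisj, hcov⟩ :=
    exists_disjoint_badBalls_covering_stoppingScale_pos hA hF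
  calc A * μ {x | 0 < stoppingScale μ F A x}
      ≤ A * ∑' p : u, μ (closedBall p.1.1 (8 * p.1.2)) := by
        gcongr
        exact (measure_mono hcov).trans (measure_biUnion_le _ hcount _)
    _ = 8 ^ finrank ℝ E * ∑' p : u, A * μ (ball p.1.1 p.1.2) := by
        have h8 (p : u) : μ (closedBall p.1.1 (8 * p.1.2)) =
            8 ^ finrank ℝ E * μ (ball p.1.1 p.1.2) := by
          rw [Measure.addHaar_closedBall_eq_addHaar_ball,
            addHaar_ball_mul_center μ p.1.1 p.1.1 (by norm_num), ENNReal.ofReal_ofNat]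
        simp_rw [h8, ENNReal.tsum_mul_left, mul_left_comm]
    _ ≤ 8 ^ finrank ℝ E * ∑' p : u, ∫⁻ y in ball p.1.1 p.1.2, F y ∂μ := by
        gcongr with p
        exact mul_measure_ball_le_of_mem_badBalls (hu p.2)
    _ = 8 ^ finrank ℝ E * ∫⁻ y in ⋃ p ∈ u, ball p.1 p.2, F y ∂μ := by
        rw [lintegral_biUnion hcount (fun p _ => measurableSet_ball) hdisj]
    _ ≤ 8 ^ finrank ℝ E * ∫⁻ x, F x ∂μ := by
        gcongr _ * ?_
        exact setLIntegral_le_lintegral _ _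

end StoppingScale

/-! ### Whitney covers -/

section WhitneyCover

variable {E : Type*} [NormedAddCommGroup E]

/-- The Whitney ball of the scale `ρ` centred at `z`: the ball whose radius is a tenth of the scale
at its centre. -/
abbrev whitneyBall (ρ : E → ℝ) (z : E) : Set E := ball z (ρ z / 10)

/-- `p` is a family of centres of Whitney balls covering `s` at the scale `ρ`: the balls shrunk to
radius `ρ / 25` cover `s`, and those shrunk to radius `ρ / 100` are pairwise disjoint. -/
structure IsWhitneyCover {ι : Type*} (ρ : E → ℝ) (s : Set E) (p : ι → E) : Prop where
  lipschitz : LipschitzWith 1 ρ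
  pos : ∀ i, 0 < ρ (p i)
  disjoint : Pairwise (Function.onFun Disjoint fun i => ball (p i) (ρ (p i) / 100))
  exists_mem : ∀ x ∈ s, ∃ i, x ∈ closedBall (p i) (ρ (p i) / 25)

section Scale

variable {ρ : E → ℝ} (hρ : LipschitzWith 1 ρ) {x z : E}

include hρ

lemma scale_le_of_mem_whitneyBall (hx : x ∈ whitneyBall ρ z) : ρ x ≤ 11 / 10 * ρ z := by
  have := hρ.le_add_mul x z
  rw [NNReal.coe_one, one_mul] at this
  linarith [mem_ball.1 hx]

lemma le_scale_of_mem_whitneyBall (hx : x ∈ whitneyBall ρ z) : 9 / 10 * ρ z ≤ ρ x := by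
  have := hρ.le_add_mul z x
  rw [NNReal.coe_one, one_mul] at this
  linarith [mem_ball'.1 hx]

end Scale

variable [MeasurableSpace E] [BorelSpace E]

lemma finite_of_pairwiseDisjoint_ball (μ : Measure E) [μ.IsAddHaarMeasure] {t u : Set E}
    (ht : μ t ≠ ∞) {r : E → ℝ} {ε : ℝ} (hε : 0 < ε) (hr : ∀ x ∈ u, ε ≤ r x)
    (hdisj : u.PairwiseDisjoint fun x => ball x (r x)) (hsub : ∀ x ∈ u, ball x (r x) ⊆ t) :
    u.Finite := by
  have hfin := Measure.finite_const_le_meas_of_disjoint_iUnion μ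
    (ε := μ (ball 0 ε)) (measure_ball_pos μ 0 hε) (As := fun x : u => ball x.1 (r x.1))
    (fun _ => measurableSet_ball) (fun x y hxy => hdisj x.2 y.2 (Subtype.coe_ne_coe.2 hxy))
    (ne_top_of_le_ne_top ht (measure_mono (Set.iUnion_subset fun x => hsub x.1 x.2)))
  have hlarge (x : u) : μ (ball 0 ε) ≤ μ (ball x.1 (r x.1)) := by
    rw [← Measure.addHaar_ball_center μ x.1]
    exact measure_mono (ball_subset_ball (hr x.1 x.2))
  simp only [hlarge, Set.ofPred_true, Set.finite_univ_iff] at hfin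
  exact hfin

theorem exists_isWhitneyCover (μ : Measure E) [μ.IsAddHaarMeasure] {ρ : E → ℝ} {R : ℝ}
    (hR : ∀ x, ρ x ≤ R) (hρ : LipschitzWith 1 ρ) (hfin : μ {x | 0 < ρ x} ≠ ∞) {ε : ℝ}
    (hε : 0 < ε) : ∃ (m : ℕ) (p : Fin m → E), IsWhitneyCover ρ {x | ε < ρ x} p := by
  obtain ⟨u, hu, hdisj, hcov⟩ := Vitali.exists_disjoint_subfamily_covering_enlargement_closedBall
    {x | ε < ρ x} id (fun x => ρ x / 100) (R / 100) (fun x _ => by linarith [hR x]) 4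
    (by norm_num)
  have hdisj' : u.PairwiseDisjoint fun x => ball x (ρ x / 100) :=
    hdisj.mono fun _ => ball_subset_closedBall
  have hpos (x : u) : ε < ρ x := hu x.2
  have hsub (x : E) (hx : x ∈ u) : ball x (ρ x / 100) ⊆ {x | 0 < ρ x} := fun y hy => by
    have hxy : y ∈ whitneyBall ρ x :=
      ball_subset_ball (by linarith [hpos ⟨x, hx⟩]) hy
    have := le_scale_of_mem_whitneyBall hρ hxy
    exact Set.mem_ofPred.2 (by linarith [hpos ⟨x, hx⟩])
  have hu_fin : Finite u := finite_of_pairwiseDisjoint_ball μ hfin (ε := ε / 100) (by positivity)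
    (fun x hx => by linarith [hpos ⟨x, hx⟩]) hdisj' hsub
  obtain ⟨m, ⟨e⟩⟩ := Finite.exists_equiv_fin u
  refine ⟨m, fun i => e.symm i, hρ, fun i => hε.trans (hpos _), fun i j hij => ?_, fun x hx => ?_⟩
  · exact hdisj' (e.symm i).2 (e.symm j).2 (Subtype.coe_ne_coe.2 (e.symm.injective.ne hij))
  · obtain ⟨y, hy, hxy⟩ := hcov x hx
    refine ⟨e ⟨y, hy⟩, ?_⟩
    have hmem : x ∈ closedBall y (4 * (ρ y / 100)) :=
      hxy (mem_closedBall_self (by linarith [Set.mem_ofPred.1 hx]))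
    rw [Equiv.symm_apply_apply]
    exact closedBall_subset_closedBall (by linarith) hmem

namespace IsWhitneyCover

variable [NormedSpace ℝ E] [FiniteDimensional ℝ E]
  {ι : Type*} [Fintype ι] {ρ : E → ℝ} {s : Set E} {p : ι → E} (hp : IsWhitneyCover ρ s p)

include hp

open scoped Classical in
/- The balls through `x` have radii comparable to `ρ x`, so that their disjoint shrunken copies
fill a fixed proportion of `ball x (2 * ρ x)`. -/
theorem card_filter_mem_le (x : E) :
    ({i | x ∈ whitneyBall ρ (p i)} : Finset ι).card ≤ 220 ^ finrank ℝ E := by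
  set S : Finset ι := {i | x ∈ whitneyBall ρ (p i)}
  have hmem (i : ι) (hi : i ∈ S) : x ∈ whitneyBall ρ (p i) := (Finset.mem_filter.1 hi).2
  rcases S.eq_empty_or_nonempty with hS | ⟨i₀, hi₀⟩
  · simp [hS]
  have hx : 0 < ρ x := by
    linarith [hp.pos i₀, le_scale_of_mem_whitneyBall hp.lipschitz (hmem i₀ hi₀)]
  set μ : Measure E := Measure.addHaar
  set v := μ (ball x (ρ x / 110))
  have hv₀ : v ≠ 0 := (measure_ball_pos μ x (by positivity)).ne'
  have hvolume : (S.card : ℝ≥0∞) * v ≤ 220 ^ finrank ℝ E * v := by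
    calc (S.card : ℝ≥0∞) * v = ∑ _ ∈ S, v := by rw [Finset.sum_const, nsmul_eq_mul]
      _ ≤ ∑ i ∈ S, μ (ball (p i) (ρ (p i) / 100)) := by
          refine Finset.sum_le_sum fun i hi => ?_
          rw [Measure.addHaar_ball_center μ (p i), ← Measure.addHaar_ball_center μ x]
          refine measure_mono (ball_subset_ball ?_)
          linarith [scale_le_of_mem_whitneyBall hp.lipschitz (hmem i hi)]
      _ = μ (⋃ i ∈ S, ball (p i) (ρ (p i) / 100)) :=
          (measure_biUnion_finset (fun i _ j _ hij => hp.disjoint hij)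
            fun _ _ => measurableSet_ball).symm
      _ ≤ μ (ball x (220 * (ρ x / 110))) := by
          refine measure_mono (Set.iUnion₂_subset fun i hi => ball_subset_ball' ?_)
          linarith [hp.pos i, le_scale_of_mem_whitneyBall hp.lipschitz (hmem i hi),
            mem_ball'.1 (hmem i hi)]
      _ = 220 ^ finrank ℝ E * v := by
          rw [addHaar_ball_mul_center μ x x (by norm_num), ENNReal.ofReal_ofNat]
  exact_mod_cast (ENNReal.mul_le_mul_iff_left hv₀ measure_ball_lt_top.ne).1 hvolume

lemma sum_le_of_forall_mem_whitneyBall {a : ι → ℝ} {L : ℝ} (hL : 0 ≤ L) {x : E}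
    (ha : ∀ i, x ∈ whitneyBall ρ (p i) → a i ≤ L) (ha₀ : ∀ i, x ∉ whitneyBall ρ (p i) → a i = 0) :
    ∑ i, a i ≤ 220 ^ finrank ℝ E * L := by
  classical
  calc ∑ i, a i = ∑ i with x ∈ whitneyBall ρ (p i), a i :=
        (Finset.sum_filter_of_ne fun i _ hi => not_not.1 (mt (ha₀ i) hi)).symm
    _ ≤ ({i | x ∈ whitneyBall ρ (p i)} : Finset ι).card • L :=
        Finset.sum_le_card_nsmul _ _ _ fun i hi => ha i (Finset.mem_filter.1 hi).2
    _ ≤ 220 ^ finrank ℝ E * L := by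
        rw [nsmul_eq_mul]
        gcongr
        exact_mod_cast hp.card_filter_mem_le x

lemma sum_measure_whitneyBall_le (μ : Measure E) [μ.IsAddHaarMeasure] :
    ∑ i, μ (whitneyBall ρ (p i)) ≤ 10 ^ finrank ℝ E * μ {x | 0 < ρ x} := by
  have hten (i : ι) : μ (whitneyBall ρ (p i)) =
      10 ^ finrank ℝ E * μ (ball (p i) (ρ (p i) / 100)) := by
    rw [whitneyBall, show ρ (p i) / 10 = 10 * (ρ (p i) / 100) by ring,
      addHaar_ball_mul_center μ (p i) (p i) (by norm_num), ENNReal.ofReal_ofNat]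
  rw [Finset.sum_congr rfl fun i _ => hten i, ← Finset.mul_sum,
    ← tsum_fintype (L := .unconditional ι),
    ← measure_iUnion (fun i j hij => hp.disjoint hij) fun _ => measurableSet_ball]
  gcongr
  refine Set.iUnion_subset fun i x hx => ?_
  have hxi : x ∈ whitneyBall ρ (p i) := ball_subset_ball (by linarith [hp.pos i]) hx
  exact (mul_pos (by norm_num) (hp.pos i)).trans_le (le_scale_of_mem_whitneyBall hp.lipschitz hxi)

end IsWhitneyCover

end WhitneyCover

/-! ### Whitney partitions of unity -/

lemma fderiv_eq_zero_of_notMem_of_tsupport_subset {E G : Type*} [NormedAddCommGroup E]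
    [NormedSpace ℝ E] [NormedAddCommGroup G] [NormedSpace ℝ G] {f : E → G} {s : Set E}
    (hf : tsupport f ⊆ s) {x : E} (hx : x ∉ s) : fderiv ℝ f x = 0 :=
  image_eq_zero_of_notMem_tsupport fun h => hx (hf (tsupport_fderiv_subset ℝ h))

section RescaledBump

variable (E : Type*) [NormedAddCommGroup E] [NormedSpace ℝ E] [FiniteDimensional ℝ E]

/-- A fixed smooth bump function, equal to `1` on `closedBall 0 (2 / 5)` and supported in
`closedBall 0 (4 / 5)`. -/
noncomputable def unitBump : ContDiffBump (0 : E) where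
  rIn := 2 / 5
  rOut := 4 / 5
  rIn_pos := by norm_num
  rIn_lt_rOut := by norm_num

/-- The supremum of the norm of the derivative of `unitBump E`. -/
noncomputable def bumpGradientBound : ℝ := ⨆ x, ‖fderiv ℝ (unitBump E) x‖

lemma bumpGradientBound_nonneg : 0 ≤ bumpGradientBound E := Real.iSup_nonneg fun _ => norm_nonneg _

variable {E}

lemma norm_fderiv_unitBump_le (x : E) : ‖fderiv ℝ (unitBump E) x‖ ≤ bumpGradientBound E := by
  have hcont : Continuous (fderiv ℝ (unitBump E)) :=
    (unitBump E).contDiff.continuous_fderiv (n := 1) one_ne_zero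
  obtain ⟨C, hC⟩ := hcont.bounded_above_of_compact_support
    ((unitBump E).hasCompactSupport.fderiv (𝕜 := ℝ))
  exact le_ciSup ⟨C, Set.forall_mem_range.2 hC⟩ x

/-- The bump function `unitBump E` transplanted to the ball of centre `c` and radius `d`. -/
noncomputable def rescaledBump (c : E) (d : ℝ) (x : E) : ℝ := unitBump E (d⁻¹ • (x - c))

lemma contDiff_rescaledBump (c : E) (d : ℝ) : ContDiff ℝ 1 (rescaledBump c d) :=
  (unitBump E).contDiff.comp ((contDiff_id.sub contDiff_const).const_smul d⁻¹)

lemma rescaledBump_mem_Icc (c : E) (d : ℝ) (x : E) : rescaledBump c d x ∈ Set.Icc (0 : ℝ) 1 :=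
  ⟨(unitBump E).nonneg, (unitBump E).le_one⟩

section

variable (c : E) {d : ℝ} (hd : 0 < d)

include hd

lemma rescaledBump_eq_one {x : E} (hx : x ∈ closedBall c (2 / 5 * d)) :
    rescaledBump c d x = 1 := by
  refine (unitBump E).one_of_mem_closedBall ?_
  rw [mem_closedBall_zero_iff, norm_smul, norm_inv, Real.norm_of_nonneg hd.le,
    inv_mul_le_iff₀ hd, ← dist_eq_norm, mul_comm]
  exact hx

lemma tsupport_rescaledBump_subset : tsupport (rescaledBump c d) ⊆ ball c d := by
  have hsupport : Function.support (rescaledBump c d) ⊆ closedBall c (4 / 5 * d) := fun x hx => by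
    have hx' : d⁻¹ • (x - c) ∈ Function.support (unitBump E) := hx
    rw [(unitBump E).support_eq, mem_ball_zero_iff, norm_smul, norm_inv,
      Real.norm_of_nonneg hd.le, inv_mul_lt_iff₀ hd, ← dist_eq_norm, mul_comm] at hx'
    exact hx'.le
  exact (closure_minimal hsupport isClosed_closedBall).trans
    (closedBall_subset_ball (by linarith))

lemma norm_fderiv_rescaledBump_le (x : E) :
    ‖fderiv ℝ (rescaledBump c d) x‖ ≤ bumpGradientBound E / d := by
  have hfderiv : fderiv ℝ (rescaledBump c d) x = d⁻¹ • fderiv ℝ (unitBump E) (d⁻¹ • (x - c)) := by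
    rw [← fderiv_comp_smul, ← fderiv_comp_sub]
    rfl
  rw [hfderiv, norm_smul, norm_inv, Real.norm_of_nonneg hd.le, div_eq_inv_mul]
  gcongr
  exact norm_fderiv_unitBump_le _

end

end RescaledBump

section TelescopingPartition

lemma prod_one_sub_mem_Icc {ι : Type*} {φ : ι → ℝ} (hφ : ∀ j, φ j ∈ Set.Icc (0 : ℝ) 1)
    (s : Finset ι) : ∏ j ∈ s, (1 - φ j) ∈ Set.Icc (0 : ℝ) 1 :=
  ⟨Finset.prod_nonneg fun j _ => sub_nonneg.2 (hφ j).2,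
    Finset.prod_le_one (fun j _ => sub_nonneg.2 (hφ j).2) fun j _ => sub_le_self _ (hφ j).1⟩

lemma norm_fderiv_prod_one_sub_le {E ι : Type*} [NormedAddCommGroup E] [NormedSpace ℝ E]
    {φ : ι → E → ℝ} (hφ : ∀ j, Differentiable ℝ (φ j)) {x : E}
    (hφx : ∀ j, φ j x ∈ Set.Icc (0 : ℝ) 1) (s : Finset ι) :
    ‖fderiv ℝ (fun y => ∏ j ∈ s, (1 - φ j y)) x‖ ≤ ∑ j ∈ s, ‖fderiv ℝ (φ j) x‖ := by
  classical
  rw [fderiv_finsetProd fun j _ => ((hφ j).const_sub 1) x]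
  refine norm_sum_le_of_le _ fun j _ => ?_
  obtain ⟨hprod₀, hprod₁⟩ := prod_one_sub_mem_Icc hφx (s.erase j)
  rw [fderiv_const_sub, norm_smul, norm_neg, Real.norm_of_nonneg hprod₀]
  exact mul_le_of_le_one_left (norm_nonneg _) hprod₁

variable {X ι : Type*} [Fintype ι] [LinearOrder ι]

/-- The functions `φ i * ∏ j < i, (1 - φ j)`. If the `φ i` take values in `[0, 1]`, then they form
a partition of unity on the set where some `φ i` equals `1`. -/
noncomputable def telescopingPartition (φ : ι → X → ℝ) (i : ι) (x : X) : ℝ :=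
  φ i x * ∏ j with j < i, (1 - φ j x)

lemma sum_telescopingPartition (φ : ι → X → ℝ) (x : X) :
    ∑ i, telescopingPartition φ i x = 1 - ∏ i, (1 - φ i x) := by
  rw [Finset.prod_one_sub_ordered, _root_.sub_sub_cancel]
  rfl

lemma sum_telescopingPartition_eq_one {φ : ι → X → ℝ} {i : ι} {x : X} (hi : φ i x = 1) :
    ∑ i, telescopingPartition φ i x = 1 := by
  rw [sum_telescopingPartition, Finset.prod_eq_zero (Finset.mem_univ i) (sub_eq_zero.2 hi.symm),
    sub_zero]

lemma support_telescopingPartition_subset (φ : ι → X → ℝ) (i : ι) :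
    Function.support (telescopingPartition φ i) ⊆ Function.support (φ i) :=
  Function.support_mul_subset_left _ _

lemma telescopingPartition_nonneg {φ : ι → X → ℝ} {x : X}
    (hφ : ∀ j, φ j x ∈ Set.Icc (0 : ℝ) 1) (i : ι) : 0 ≤ telescopingPartition φ i x :=
  mul_nonneg (hφ i).1 (prod_one_sub_mem_Icc hφ _).1

lemma sum_telescopingPartition_le_one {φ : ι → X → ℝ} {x : X}
    (hφ : ∀ j, φ j x ∈ Set.Icc (0 : ℝ) 1) : ∑ i, telescopingPartition φ i x ≤ 1 := by
  rw [sum_telescopingPartition]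
  exact sub_le_self _ (prod_one_sub_mem_Icc hφ _).1

variable {E : Type*} [NormedAddCommGroup E] [NormedSpace ℝ E] {φ : ι → E → ℝ}

lemma contDiff_telescopingPartition (hφ : ∀ j, ContDiff ℝ 1 (φ j)) (i : ι) :
    ContDiff ℝ 1 (telescopingPartition φ i) :=
  (hφ i).mul (contDiff_prod fun j _ => contDiff_const.sub (hφ j))

lemma norm_fderiv_telescopingPartition_le (hφ : ∀ j, Differentiable ℝ (φ j)) {x : E}
    (hφx : ∀ j, φ j x ∈ Set.Icc (0 : ℝ) 1) (i : ι) :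
    ‖fderiv ℝ (telescopingPartition φ i) x‖ ≤ ∑ j, ‖fderiv ℝ (φ j) x‖ := by
  have hdiff : DifferentiableAt ℝ (fun y => ∏ j with j < i, (1 - φ j y)) x :=
    (HasFDerivAt.finsetProd fun j _ => ((hφ j).const_sub 1 x).hasFDerivAt).differentiableAt
  obtain ⟨hprod₀, hprod₁⟩ := prod_one_sub_mem_Icc hφx {j | j < i}
  calc ‖fderiv ℝ (telescopingPartition φ i) x‖
      = ‖φ i x • fderiv ℝ (fun y => ∏ j with j < i, (1 - φ j y)) x +
          (∏ j with j < i, (1 - φ j x)) • fderiv ℝ (φ i) x‖ :=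
        congrArg _ (fderiv_fun_mul (hφ i x) hdiff)
    _ ≤ ‖fderiv ℝ (fun y => ∏ j with j < i, (1 - φ j y)) x‖ + ‖fderiv ℝ (φ i) x‖ := by
        refine norm_add_le_of_le ?_ ?_
        · rw [norm_smul, Real.norm_of_nonneg (hφx i).1]
          exact mul_le_of_le_one_left (norm_nonneg _) (hφx i).2
        · rw [norm_smul, Real.norm_of_nonneg hprod₀]
          exact mul_le_of_le_one_left (norm_nonneg _) hprod₁
    _ ≤ ∑ j ∈ insert i ({j | j < i} : Finset ι), ‖fderiv ℝ (φ j) x‖ := by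
        rw [Finset.sum_insert (by simp), add_comm]
        gcongr
        exact norm_fderiv_prod_one_sub_le hφ hφx _
    _ ≤ ∑ j, ‖fderiv ℝ (φ j) x‖ :=
        Finset.sum_le_sum_of_subset_of_nonneg (Finset.subset_univ _) fun _ _ _ => norm_nonneg _

end TelescopingPartition

section WhitneyPartition

variable {E ι : Type*} [NormedAddCommGroup E] [NormedSpace ℝ E] [Fintype ι]

/-- `χ` is a partition of unity on `s` subordinate to the Whitney balls centred at `p`, with
gradients of size at most `M / ρ`. -/
structure IsWhitneyPartition (ρ : E → ℝ) (s : Set E) (p : ι → E) (M : ℝ) (χ : ι → E → ℝ) :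
    Prop where
  contDiff : ∀ i, ContDiff ℝ 1 (χ i)
  nonneg : ∀ i x, 0 ≤ χ i x
  sum_le_one : ∀ x, ∑ i, χ i x ≤ 1
  sum_eq_one : ∀ x ∈ s, ∑ i, χ i x = 1
  tsupport_subset : ∀ i, tsupport (χ i) ⊆ whitneyBall ρ (p i)
  norm_fderiv_mul_le : ∀ i x, ‖fderiv ℝ (χ i) x‖ * ρ x ≤ M

lemma IsWhitneyPartition.le_one {ρ : E → ℝ} {s : Set E} {p : ι → E} {M : ℝ} {χ : ι → E → ℝ}
    (hχ : IsWhitneyPartition ρ s p M χ) (i : ι) (x : E) : χ i x ≤ 1 :=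
  (Finset.single_le_sum (f := fun i => χ i x) (fun j _ => hχ.nonneg j x)
    (Finset.mem_univ i)).trans (hχ.sum_le_one x)

variable (E) [FiniteDimensional ℝ E]

/-- The bound for `|∇χ| ρ` of the Whitney partitions of unity on `E`. -/
noncomputable def whitneyGradientBound : ℝ := 220 ^ finrank ℝ E * (11 * bumpGradientBound E)

lemma whitneyGradientBound_nonneg : 0 ≤ whitneyGradientBound E := by
  have := bumpGradientBound_nonneg E
  unfold whitneyGradientBound
  positivity

variable {E}

theorem IsWhitneyCover.isWhitneyPartition [LinearOrder ι] {ρ : E → ℝ} {s : Set E} {p : ι → E}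
    (hp : IsWhitneyCover ρ s p) (hρ : ∀ x, 0 ≤ ρ x) :
    IsWhitneyPartition ρ s p (whitneyGradientBound E)
      (telescopingPartition fun i => rescaledBump (p i) (ρ (p i) / 10)) where
  contDiff := contDiff_telescopingPartition fun i => contDiff_rescaledBump _ _
  nonneg i x := telescopingPartition_nonneg (fun j => rescaledBump_mem_Icc _ _ x) i
  sum_le_one x := sum_telescopingPartition_le_one fun j => rescaledBump_mem_Icc _ _ x
  sum_eq_one x hx := by
    obtain ⟨i, hi⟩ := hp.exists_mem x hx
    refine sum_telescopingPartition_eq_one (i := i)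
      (rescaledBump_eq_one _ (div_pos (hp.pos i) (by norm_num)) ?_)
    exact closedBall_subset_closedBall (by linarith) hi
  tsupport_subset i := (closure_mono (support_telescopingPartition_subset _ i)).trans
    (tsupport_rescaledBump_subset _ (div_pos (hp.pos i) (by norm_num)))
  norm_fderiv_mul_le i x := by
    let _ : MeasurableSpace E := borel E
    have : BorelSpace E := ⟨rfl⟩
    have hpos (j : ι) : 0 < ρ (p j) / 10 := div_pos (hp.pos j) (by norm_num)
    refine (mul_le_mul_of_nonneg_right (norm_fderiv_telescopingPartition_le
      (fun j => (contDiff_rescaledBump _ _).differentiable one_ne_zero)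
      (fun j => rescaledBump_mem_Icc _ _ x) i) (hρ x)).trans ?_
    rw [Finset.sum_mul]
    refine hp.sum_le_of_forall_mem_whitneyBall (x := x)
      (mul_nonneg (by norm_num) (bumpGradientBound_nonneg E)) (fun j hj => ?_) fun j hj => ?_
    · calc ‖fderiv ℝ (rescaledBump (p j) (ρ (p j) / 10)) x‖ * ρ x
          ≤ bumpGradientBound E / (ρ (p j) / 10) * (11 * (ρ (p j) / 10)) := by
            gcongr
            · exact hρ x
            · exact div_nonneg (bumpGradientBound_nonneg E) (hpos j).le
            · exact norm_fderiv_rescaledBump_le _ (hpos j) x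
            · linarith [scale_le_of_mem_whitneyBall hp.lipschitz hj]
        _ = 11 * bumpGradientBound E := by
            rw [mul_left_comm, div_mul_cancel₀ _ (hpos j).ne']
    · rw [fderiv_eq_zero_of_notMem_of_tsupport_subset (tsupport_rescaledBump_subset _ (hpos j)) hj,
        norm_zero, zero_mul]

end WhitneyPartition

/-! ### Sums with bounded overlap -/

section BoundedOverlap

lemma rpow_sum_le_of_card_le {ι : Type*} [Fintype ι] {q : ℝ} (hq : 1 ≤ q) {v : ι → ℝ≥0∞}
    {t : Finset ι} (hv : ∀ i ∉ t, v i = 0) {N : ℕ} (ht : t.card ≤ N) :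
    (∑ i, v i) ^ q ≤ (N : ℝ≥0∞) ^ (q - 1) * ∑ i, v i ^ q := by
  rw [← Finset.sum_subset (Finset.subset_univ t) fun i _ hi => hv i hi]
  refine (ENNReal.rpow_sum_le_const_mul_sum_rpow t v hq).trans ?_
  gcongr
  exact Finset.subset_univ t

variable {X ι : Type*} [MeasurableSpace X] {μ : Measure X} [Fintype ι] {B : ι → Set X} {N : ℕ}

open scoped Classical in
lemma sum_setLIntegral_le_of_card_le (hB : ∀ i, MeasurableSet (B i))
    (hN : ∀ x, ({i | x ∈ B i} : Finset ι).card ≤ N) {F : X → ℝ≥0∞} (hF : Measurable F) :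
    ∑ i, ∫⁻ x in B i, F x ∂μ ≤ N * ∫⁻ x, F x ∂μ := by
  calc ∑ i, ∫⁻ x in B i, F x ∂μ = ∫⁻ x, ∑ i, (B i).indicator F x ∂μ := by
        rw [lintegral_finsetSum _ fun i _ => hF.indicator (hB i)]
        simp_rw [lintegral_indicator (hB _)]
    _ ≤ ∫⁻ x, N * F x ∂μ := by
        gcongr with x
        simp only [Set.indicator_apply]
        rw [← Finset.sum_filter, Finset.sum_const, nsmul_eq_mul]
        gcongr
        exact hN x
    _ = N * ∫⁻ x, F x ∂μ := lintegral_const_mul' _ _ (ENNReal.natCast_ne_top N)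

open scoped Classical in
theorem lintegral_sum_rpow_le_of_card_le {q : ℝ} (hq : 1 ≤ q) (hB : ∀ i, MeasurableSet (B i))
    (hN : ∀ x, ({i | x ∈ B i} : Finset ι).card ≤ N) {v : ι → X → ℝ≥0∞}
    (hv : ∀ i, Measurable (v i)) (hv₀ : ∀ i, ∀ x ∉ B i, v i x = 0) {F : X → ℝ≥0∞}
    (hF : Measurable F) {K : ℝ≥0∞}
    (hvF : ∀ i, ∫⁻ x in B i, v i x ^ q ∂μ ≤ K * ∫⁻ x in B i, F x ∂μ) :
    ∫⁻ x, (∑ i, v i x) ^ q ∂μ ≤ (N : ℝ≥0∞) ^ q * K * ∫⁻ x, F x ∂μ := by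
  have hq₀ : 0 < q := one_pos.trans_le hq
  have hsupport (i : ι) : ∫⁻ x, v i x ^ q ∂μ = ∫⁻ x in B i, v i x ^ q ∂μ :=
    (setLIntegral_eq_of_support_subset fun x hx => not_not.1 fun hxB =>
      hx (by simp only [hv₀ i x hxB, ENNReal.zero_rpow_of_pos hq₀])).symm
  calc ∫⁻ x, (∑ i, v i x) ^ q ∂μ ≤ ∫⁻ x, (N : ℝ≥0∞) ^ (q - 1) * ∑ i, v i x ^ q ∂μ := by
        gcongr with x
        exact rpow_sum_le_of_card_le hq (fun i hi => hv₀ i x (by simpa using hi)) (hN x)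
    _ = (N : ℝ≥0∞) ^ (q - 1) * ∑ i, ∫⁻ x in B i, v i x ^ q ∂μ := by
        rw [lintegral_const_mul' _ _ (ENNReal.rpow_ne_top_of_nonneg (sub_nonneg.2 hq)
          (ENNReal.natCast_ne_top N)), lintegral_finsetSum _ fun i _ => (hv i).pow_const q]
        simp_rw [hsupport]
    _ ≤ (N : ℝ≥0∞) ^ (q - 1) * (K * (N * ∫⁻ x, F x ∂μ)) := by
        gcongr _ * ?_
        refine (Finset.sum_le_sum fun i _ => hvF i).trans ?_
        rw [← Finset.mul_sum]
        gcongr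
        exact sum_setLIntegral_le_of_card_le hB hN hF
    _ = (N : ℝ≥0∞) ^ q * K * ∫⁻ x, F x ∂μ := by
        have hpow : (N : ℝ≥0∞) ^ q = (N : ℝ≥0∞) ^ (q - 1) * N := by
          conv_rhs => enter [2]; rw [← ENNReal.rpow_one (N : ℝ≥0∞)]
          rw [← ENNReal.rpow_add_of_nonneg _ _ (sub_nonneg.2 hq) zero_le_one, sub_add_cancel]
        rw [hpow]
        ring

end BoundedOverlap

/-! ### Bad parts -/

section Cutoff

variable {E G : Type*} [NormedAddCommGroup E] [NormedSpace ℝ E] [NormedAddCommGroup G]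
  [NormedSpace ℝ G] {f : E → G} {χ : E → ℝ} {q : ℝ}

lemma fderiv_smul_sub_const {x : E} (hf : DifferentiableAt ℝ f x) (hχ : DifferentiableAt ℝ χ x)
    (a : G) : fderiv ℝ (fun y => χ y • (f y - a)) x =
      χ x • fderiv ℝ f x + (fderiv ℝ χ x).smulRight (f x - a) := by
  rw [fderiv_fun_smul hχ (hf.sub_const a), fderiv_sub_const]

lemma enorm_fderiv_smul_sub_const_rpow_le (hq : 1 ≤ q) {x : E} (hf : DifferentiableAt ℝ f x)
    (hχ : DifferentiableAt ℝ χ x) (hχx : ‖χ x‖ ≤ 1) {L : ℝ} (hL : ‖fderiv ℝ χ x‖ ≤ L) (a : G) :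
    ‖fderiv ℝ (fun y => χ y • (f y - a)) x‖ₑ ^ q ≤
      2 ^ (q - 1) * (‖fderiv ℝ f x‖ₑ ^ q + ENNReal.ofReal L ^ q * ‖f x - a‖ₑ ^ q) := by
  have hq₀ : 0 ≤ q := zero_le_one.trans hq
  rw [← ENNReal.mul_rpow_of_nonneg _ _ hq₀, fderiv_smul_sub_const hf hχ]
  refine le_trans ?_ (ENNReal.rpow_add_le_mul_rpow_add_rpow _ _ hq)
  refine ENNReal.rpow_le_rpow ((enorm_add_le (χ x • fderiv ℝ f x)
    ((fderiv ℝ χ x).smulRight (f x - a))).trans (add_le_add ?_ ?_)) hq₀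
  · rw [enorm_smul]
    refine mul_le_of_le_one_left' ?_
    rwa [← ofReal_norm, ENNReal.ofReal_le_one]
  · rw [← ofReal_norm, ContinuousLinearMap.norm_smulRight_apply, ENNReal.ofReal_mul (norm_nonneg _),
      ofReal_norm (f x - a)]
    gcongr

variable [FiniteDimensional ℝ E] [CompleteSpace G] [MeasurableSpace E] [BorelSpace E]
  (μ : Measure E) [μ.IsAddHaarMeasure]

variable (E q) in
/-- The factor by which cutting off a function minus its mean on a ball enlarges the `L^q` norm of
its gradient, raised to the power `q`, if the gradient of the cutoff is bounded by `M` over the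
radius of the ball. -/
noncomputable def cutoffConstant (M : ℝ) : ℝ≥0∞ :=
  2 ^ (q - 1) * (1 + 2 ^ finrank ℝ E * ENNReal.ofReal (2 * M) ^ q)

theorem setLIntegral_fderiv_smul_sub_average_rpow_le (hq : 1 ≤ q) (hf : ContDiff ℝ 1 f)
    (hχ : ContDiff ℝ 1 χ) {z : E} {d M : ℝ} (hd : 0 < d) (hχ₁ : ∀ x ∈ ball z d, ‖χ x‖ ≤ 1)
    (hM : ∀ x ∈ ball z d, ‖fderiv ℝ χ x‖ ≤ M / d) :
    ∫⁻ x in ball z d, ‖fderiv ℝ (fun x => χ x • (f x - ⨍ y in ball z d, f y ∂μ)) x‖ₑ ^ q ∂μ ≤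
      cutoffConstant E q M * ∫⁻ x in ball z d, ‖fderiv ℝ f x‖ₑ ^ q ∂μ := by
  have hq₀ : 0 ≤ q := zero_le_one.trans hq
  set a := ⨍ y in ball z d, f y ∂μ
  set I := ∫⁻ x in ball z d, ‖fderiv ℝ f x‖ₑ ^ q ∂μ
  have hmeas : Measurable fun x => ‖fderiv ℝ f x‖ₑ ^ q :=
    (hf.continuous_fderiv one_ne_zero).enorm.measurable.pow_const q
  calc ∫⁻ x in ball z d, ‖fderiv ℝ (fun x => χ x • (f x - a)) x‖ₑ ^ q ∂μ
      ≤ ∫⁻ x in ball z d, 2 ^ (q - 1) *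
          (‖fderiv ℝ f x‖ₑ ^ q + ENNReal.ofReal (M / d) ^ q * ‖f x - a‖ₑ ^ q) ∂μ :=
        setLIntegral_mono' measurableSet_ball fun x hx => enorm_fderiv_smul_sub_const_rpow_le hq
          (hf.differentiable one_ne_zero x) (hχ.differentiable one_ne_zero x) (hχ₁ x hx) (hM x hx) a
    _ = 2 ^ (q - 1) *
          (I + ENNReal.ofReal (M / d) ^ q * ∫⁻ x in ball z d, ‖f x - a‖ₑ ^ q ∂μ) := by
        rw [lintegral_const_mul' _ _ (by finiteness), lintegral_add_left hmeas,
          lintegral_const_mul' _ _ (ENNReal.rpow_ne_top_of_nonneg hq₀ ENNReal.ofReal_ne_top)]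
    _ ≤ 2 ^ (q - 1) * (I + ENNReal.ofReal (M / d) ^ q *
          (2 ^ finrank ℝ E * ENNReal.ofReal (2 * d) ^ q * I)) := by
        gcongr _ * (_ + _ * ?_)
        exact poincare_inequality_ball μ hq hf z d
    _ = cutoffConstant E q M * I := by
        have hscale : ENNReal.ofReal (2 * M) ^ q =
            ENNReal.ofReal (M / d) ^ q * ENNReal.ofReal (2 * d) ^ q := by
          rw [← ENNReal.mul_rpow_of_nonneg _ _ hq₀, ← ENNReal.ofReal_mul' (by positivity)]
          congr 2
          field_simp
        rw [cutoffConstant, hscale]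
        ring

end Cutoff

section BadPart

variable {E G ι : Type*} [NormedAddCommGroup E] [NormedSpace ℝ E] [MeasurableSpace E]
  [NormedAddCommGroup G] [NormedSpace ℝ G] [Fintype ι] (μ : Measure E) {ρ : E → ℝ} {s : Set E}
  {p : ι → E} {χ : ι → E → ℝ} {M q : ℝ} {f : E → G}

/-- The `i`-th bad part of `f`: its deviation from the mean over the `i`-th Whitney ball, cut off
by `χ i`. -/
noncomputable def badPart (μ : Measure E) (ρ : E → ℝ) (p : ι → E) (χ : ι → E → ℝ) (f : E → G)
    (i : ι) (x : E) : G :=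
  χ i x • (f x - ⨍ y in whitneyBall ρ (p i), f y ∂μ)

lemma contDiff_badPart (hf : ContDiff ℝ 1 f) (hχ : IsWhitneyPartition ρ s p M χ) (i : ι) :
    ContDiff ℝ 1 (badPart μ ρ p χ f i) :=
  (hχ.contDiff i).smul (hf.sub contDiff_const)

lemma tsupport_badPart_subset (hχ : IsWhitneyPartition ρ s p M χ) (i : ι) :
    tsupport (badPart μ ρ p χ f i) ⊆ whitneyBall ρ (p i) :=
  (tsupport_smul_subset_left (χ i) _).trans (hχ.tsupport_subset i)

variable [FiniteDimensional ℝ E] [BorelSpace E] [μ.IsAddHaarMeasure]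

theorem setLIntegral_fderiv_badPart_rpow_le [CompleteSpace G] (hq : 1 ≤ q) (hf : ContDiff ℝ 1 f)
    (hp : IsWhitneyCover ρ s p) (hχ : IsWhitneyPartition ρ s p M χ) (i : ι) :
    ∫⁻ x in whitneyBall ρ (p i), ‖fderiv ℝ (badPart μ ρ p χ f i) x‖ₑ ^ q ∂μ ≤
      cutoffConstant E q M * ∫⁻ x in whitneyBall ρ (p i), ‖fderiv ℝ f x‖ₑ ^ q ∂μ := by
  have hd : 0 < ρ (p i) / 10 := div_pos (hp.pos i) (by norm_num)
  refine setLIntegral_fderiv_smul_sub_average_rpow_le μ hq hf (hχ.contDiff i) hd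
    (fun x _ => ?_) fun x hx => ?_
  · rw [Real.norm_of_nonneg (hχ.nonneg i x)]
    exact hχ.le_one i x
  · rw [le_div_iff₀ hd]
    refine le_trans ?_ (hχ.norm_fderiv_mul_le i x)
    gcongr
    linarith [le_scale_of_mem_whitneyBall hp.lipschitz hx]

lemma setLIntegral_whitneyBall_le {F : E → ℝ≥0∞} {A : ℝ≥0∞} {z : E} (hz : 0 < ρ z)
    (hF : ⨍⁻ x in ball z (ρ z), F x ∂μ ≤ A) :
    ∫⁻ x in whitneyBall ρ z, F x ∂μ ≤ 10 ^ finrank ℝ E * A * μ (whitneyBall ρ z) := by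
  have hten : 10 * (ρ z / 10) = ρ z := by ring
  rw [← measure_mul_setLAverage F measure_ball_lt_top.ne, mul_comm]
  gcongr
  calc ⨍⁻ x in whitneyBall ρ z, F x ∂μ
      ≤ ENNReal.ofReal 10 ^ finrank ℝ E * ⨍⁻ x in ball z (10 * (ρ z / 10)), F x ∂μ :=
        laverage_ball_le_of_subset μ F (by norm_num) (by positivity)
          (ball_subset_ball (by linarith))
    _ ≤ 10 ^ finrank ℝ E * A := by
        rw [hten, ENNReal.ofReal_ofNat]
        gcongr

end BadPart

/-! ### The good part -/

lemma norm_le_two_mul_of_setLAverage_le {X V : Type*} [MeasurableSpace X] [NormedAddCommGroup V]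
    {μ : Measure X} {t : Set X} {h : X → V} {q α : ℝ} (hq : 0 < q) (ht₀ : μ t ≠ 0) (ht : μ t ≠ ∞)
    (hh : AEMeasurable (fun x => ‖h x‖ₑ) (μ.restrict t)) (hα : 0 ≤ α)
    (hosc : ∀ y ∈ t, ∀ z ∈ t, ‖h y - h z‖ ≤ α)
    (haverage : ⨍⁻ x in t, ‖h x‖ₑ ^ q ∂μ ≤ ENNReal.ofReal α ^ q) : ∀ y ∈ t, ‖h y‖ ≤ 2 * α := by
  obtain ⟨z, hz, hle⟩ := exists_le_setLAverage ht₀ ht (hh.pow_const q)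
  have hzα : ‖h z‖ ≤ α := by
    rw [← ENNReal.ofReal_le_ofReal_iff hα, ofReal_norm, ← ENNReal.rpow_le_rpow_iff hq]
    exact hle.trans haverage
  intro y hy
  linarith [norm_sub_norm_le (h y) (h z), hosc y hy z hz]

section GoodPart

variable {E G ι : Type*} [NormedAddCommGroup E] [NormedSpace ℝ E] [MeasurableSpace E]
  [NormedAddCommGroup G] [NormedSpace ℝ G] [Fintype ι] (μ : Measure E) {ρ : E → ℝ} {s : Set E}
  {p : ι → E} {χ : ι → E → ℝ} {M q α : ℝ} {f : E → G}

/-- The good part of `f`: what remains after subtracting all bad parts. -/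
noncomputable def goodPart (μ : Measure E) (ρ : E → ℝ) (p : ι → E) (χ : ι → E → ℝ) (f : E → G)
    (x : E) : G :=
  f x - ∑ i, badPart μ ρ p χ f i x

lemma contDiff_goodPart (hf : ContDiff ℝ 1 f) (hχ : IsWhitneyPartition ρ s p M χ) :
    ContDiff ℝ 1 (goodPart μ ρ p χ f) :=
  hf.sub (ContDiff.sum fun i _ => contDiff_badPart μ hf hχ i)

lemma fderiv_goodPart_eq_sub_sum (hf : ContDiff ℝ 1 f) (hχ : IsWhitneyPartition ρ s p M χ)
    (x : E) : fderiv ℝ (goodPart μ ρ p χ f) x =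
      fderiv ℝ f x - ∑ i, fderiv ℝ (badPart μ ρ p χ f i) x := by
  have hb (i : ι) : DifferentiableAt ℝ (badPart μ ρ p χ f i) x :=
    (contDiff_badPart μ hf hχ i).differentiable one_ne_zero x
  rw [← fderiv_fun_sum fun i _ => hb i]
  exact fderiv_fun_sub (hf.differentiable one_ne_zero x) (DifferentiableAt.fun_sum fun i _ => hb i)

lemma fderiv_goodPart (hf : ContDiff ℝ 1 f) (hχ : IsWhitneyPartition ρ s p M χ) (x : E) :
    fderiv ℝ (goodPart μ ρ p χ f) x = (1 - ∑ i, χ i x) • fderiv ℝ f x -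
      ∑ i, (fderiv ℝ (χ i) x).smulRight (f x - ⨍ y in whitneyBall ρ (p i), f y ∂μ) := by
  have hbad (i : ι) := fderiv_smul_sub_const (hf.differentiable one_ne_zero x)
    ((hχ.contDiff i).differentiable one_ne_zero x) (⨍ y in whitneyBall ρ (p i), f y ∂μ)
  rw [fderiv_goodPart_eq_sub_sum μ hf hχ, sub_smul, one_smul, Finset.sum_smul, sub_sub,
    ← Finset.sum_add_distrib]
  exact congrArg _ (Finset.sum_congr rfl fun i _ => hbad i)

/- Where the `χ i` sum to `1` their derivatives sum to `0`, so that `f x` may be replaced by any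
other constant in the formula for the gradient of the good part. -/
lemma fderiv_goodPart_of_mem_nhds (hf : ContDiff ℝ 1 f) (hχ : IsWhitneyPartition ρ s p M χ) {x : E}
    (hx : s ∈ nhds x) (a : G) : fderiv ℝ (goodPart μ ρ p χ f) x =
      -∑ i, (fderiv ℝ (χ i) x).smulRight (a - ⨍ y in whitneyBall ρ (p i), f y ∂μ) := by
  have hone : (fun y => ∑ i, χ i y) =ᶠ[nhds x] fun _ => 1 := by
    filter_upwards [hx] with y hy using hχ.sum_eq_one y hy
  have hzero : ∑ i, fderiv ℝ (χ i) x = 0 := by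
    rw [← fderiv_fun_sum fun i _ => (hχ.contDiff i).differentiable one_ne_zero x, hone.fderiv_eq,
      fderiv_const_apply]
  rw [fderiv_goodPart μ hf hχ, hone.eq_of_nhds, sub_self, zero_smul, zero_sub, neg_inj,
    ← sub_eq_zero, ← Finset.sum_sub_distrib]
  ext v
  have hzero_apply : ∑ i, fderiv ℝ (χ i) x v = 0 := by
    rw [← _root_.sum_apply, hzero, _root_.zero_apply]
  simp only [_root_.sum_apply, _root_.sub_apply,
    ContinuousLinearMap.smulRight_apply, ← smul_sub, sub_sub_sub_cancel_right, ← Finset.sum_smul,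
    hzero_apply, zero_smul, _root_.zero_apply]

variable [FiniteDimensional ℝ E] [BorelSpace E]

lemma norm_sum_fderiv_smulRight_le (hp : IsWhitneyCover ρ s p)
    (hχ : IsWhitneyPartition ρ s p M χ) (hM : 0 ≤ M) {x : E} {v : ι → G} {L : ℝ} (hL : 0 ≤ L)
    (hv : ∀ i, x ∈ whitneyBall ρ (p i) → ‖v i‖ ≤ L * ρ x) :
    ‖∑ i, (fderiv ℝ (χ i) x).smulRight (v i)‖ ≤ 220 ^ finrank ℝ E * (M * L) := by
  refine (norm_sum_le _ _).trans (hp.sum_le_of_forall_mem_whitneyBall (x := x)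
    (mul_nonneg hM hL) (fun i hi => ?_) fun i hi => ?_)
  · calc ‖(fderiv ℝ (χ i) x).smulRight (v i)‖ = ‖fderiv ℝ (χ i) x‖ * ‖v i‖ :=
          ContinuousLinearMap.norm_smulRight_apply _ _
      _ ≤ ‖fderiv ℝ (χ i) x‖ * (L * ρ x) := by
          gcongr
          exact hv i hi
      _ = ‖fderiv ℝ (χ i) x‖ * ρ x * L := by ring
      _ ≤ M * L := by
          gcongr
          exact hχ.norm_fderiv_mul_le i x
  · rw [ContinuousLinearMap.norm_smulRight_apply,
      fderiv_eq_zero_of_notMem_of_tsupport_subset (hχ.tsupport_subset i) hi, norm_zero, zero_mul]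

variable [μ.IsAddHaarMeasure] [CompleteSpace G]

lemma norm_fderiv_goodPart_le_of_mem_nhds (hq : 1 ≤ q) (hf : ContDiff ℝ 1 f)
    (hp : IsWhitneyCover ρ s p) (hχ : IsWhitneyPartition ρ s p M χ) (hM : 0 ≤ M) (hα : 0 ≤ α)
    {x : E} (hx : s ∈ nhds x)
    (hF : ⨍⁻ y in ball x (ρ x), ‖fderiv ℝ f y‖ₑ ^ q ∂μ ≤ ENNReal.ofReal α ^ q) :
    ‖fderiv ℝ (goodPart μ ρ p χ f) x‖ ≤
      220 ^ finrank ℝ E * (M * (22 ^ finrank ℝ E * (2 * α))) := by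
  rw [fderiv_goodPart_of_mem_nhds μ hf hχ hx (⨍ y in ball x (ρ x), f y ∂μ), norm_neg]
  refine norm_sum_fderiv_smulRight_le hp hχ hM (by positivity) fun i hi => ?_
  set d := ρ (p i) / 10 with hd
  have hd₀ : 0 < d := div_pos (hp.pos i) (by norm_num)
  have hle : d ≤ ρ x := by linarith [le_scale_of_mem_whitneyBall hp.lipschitz hi]
  have hratio : ρ x / d ≤ 11 := by
    rw [div_le_iff₀ hd₀]
    linarith [scale_le_of_mem_whitneyBall hp.lipschitz hi]
  have hmul : ρ x / d * d = ρ x := div_mul_cancel₀ _ hd₀.ne'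
  have hsub : ball (p i) d ⊆ ball x (ρ x / d * d) := by
    rw [hmul]
    refine ball_subset_ball' ?_
    linarith [le_scale_of_mem_whitneyBall hp.lipschitz hi, mem_ball'.1 hi]
  have haverage := norm_average_ball_sub_le μ hq hf ((one_le_div hd₀).2 hle) hd₀ hα hsub
    (by rwa [hmul])
  rw [hmul] at haverage
  calc _ ≤ (2 * (ρ x / d)) ^ finrank ℝ E * (2 * ρ x * α) := haverage
    _ ≤ (22 : ℝ) ^ finrank ℝ E * (2 * ρ x * α) := by
        have hρx : 0 ≤ ρ x := hd₀.le.trans hle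
        gcongr
        linarith
    _ = 22 ^ finrank ℝ E * (2 * α) * ρ x := by ring

lemma norm_fderiv_goodPart_le_of_forall_norm_fderiv_le (hf : ContDiff ℝ 1 f)
    (hp : IsWhitneyCover ρ s p) (hχ : IsWhitneyPartition ρ s p M χ) (hM : 0 ≤ M) {x : E} {ε L : ℝ}
    (hε : 0 < ε) (hx : ρ x ≤ ε) (hL : ∀ y ∈ ball x ε, ‖fderiv ℝ f y‖ ≤ L) :
    ‖fderiv ℝ (goodPart μ ρ p χ f) x‖ ≤ L + 220 ^ finrank ℝ E * (M * L) := by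
  have hxε : x ∈ ball x ε := mem_ball_self hε
  have hL₀ : 0 ≤ L := (norm_nonneg _).trans (hL x hxε)
  rw [fderiv_goodPart μ hf hχ]
  refine norm_sub_le_of_le ?_ (norm_sum_fderiv_smulRight_le hp hχ hM hL₀ fun i hi => ?_)
  · rw [norm_smul, Real.norm_of_nonneg (sub_nonneg.2 (hχ.sum_le_one x))]
    refine (mul_le_of_le_one_left (norm_nonneg _) (sub_le_self _ ?_)).trans (hL x hxε)
    exact Finset.sum_nonneg fun i _ => hχ.nonneg i x
  · refine norm_sub_setAverage_le
      (measure_ball_pos μ _ (div_pos (hp.pos i) (by norm_num))).ne' measure_ball_lt_top.ne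
      measurableSet_ball
      (integrableOn_of_continuous_of_isBounded μ hf.continuous isBounded_ball) fun y hy => ?_
    have hxy : dist y x < ρ x := by
      linarith [dist_triangle_right y x (p i), mem_ball.1 hi, mem_ball.1 hy,
        le_scale_of_mem_whitneyBall hp.lipschitz hi, hp.pos i]
    calc ‖f x - f y‖ ≤ L * ‖x - y‖ :=
          (convex_ball x ε).norm_image_sub_le_of_norm_fderiv_le (𝕜 := ℝ)
            (fun z _ => hf.differentiable one_ne_zero z) hL (mem_ball.2 (hxy.trans_le hx)) hxε
      _ ≤ L * ρ x := by
          gcongr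
          rw [← dist_eq_norm, dist_comm]
          exact hxy.le

theorem norm_fderiv_goodPart_le {ε : ℝ} (hq : 1 ≤ q) (hf : ContDiff ℝ 1 f)
    (hp : IsWhitneyCover ρ {x | ε < ρ x} p) (hχ : IsWhitneyPartition ρ {x | ε < ρ x} p M χ)
    (hM : 0 ≤ M) (hα : 0 ≤ α) (hε : 0 < ε)
    (hosc : ∀ y z, dist y z < 2 * ε → ‖fderiv ℝ f y - fderiv ℝ f z‖ ≤ α)
    (hF : ∀ x r, 0 < r → ρ x ≤ r →
      ⨍⁻ y in ball x r, ‖fderiv ℝ f y‖ₑ ^ q ∂μ ≤ ENNReal.ofReal α ^ q) (x : E) :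
    ‖fderiv ℝ (goodPart μ ρ p χ f) x‖ ≤
      (2 + 220 ^ finrank ℝ E * (M * (22 ^ finrank ℝ E * 2))) * α := by
  rcases lt_or_ge ε (ρ x) with hx | hx
  · have hnhds : {x | ε < ρ x} ∈ nhds x :=
      (isOpen_lt continuous_const hp.lipschitz.continuous).mem_nhds hx
    refine (norm_fderiv_goodPart_le_of_mem_nhds μ hq hf hp hχ hM hα hnhds
      (hF x _ (hε.trans hx) le_rfl)).trans ?_
    linarith
  · have hbound : ∀ y ∈ ball x ε, ‖fderiv ℝ f y‖ ≤ 2 * α :=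
      norm_le_two_mul_of_setLAverage_le (one_pos.trans_le hq) (measure_ball_pos μ x hε).ne'
        measure_ball_lt_top.ne (hf.continuous_fderiv one_ne_zero).enorm.aemeasurable hα
        (fun y hy z hz => hosc y z
          (by linarith [dist_triangle_right y z x, mem_ball.1 hy, mem_ball.1 hz])) (hF x ε hε hx)
    calc ‖fderiv ℝ (goodPart μ ρ p χ f) x‖ ≤ 2 * α + 220 ^ finrank ℝ E * (M * (2 * α)) :=
          norm_fderiv_goodPart_le_of_forall_norm_fderiv_le μ hf hp hχ hM hε hx hbound
      _ ≤ 2 * α + 220 ^ finrank ℝ E * (M * (22 ^ finrank ℝ E * (2 * α))) := by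
          gcongr 2 * α + _ * (M * ?_)
          exact le_mul_of_one_le_left (by positivity) (one_le_pow₀ (by norm_num : (1 : ℝ) ≤ 22))
      _ = (2 + 220 ^ finrank ℝ E * (M * (22 ^ finrank ℝ E * 2))) * α := by ring

end GoodPart

/-! ### The decomposition -/

section Estimates

variable {E G ι : Type*} [NormedAddCommGroup E] [NormedSpace ℝ E]
  [MeasurableSpace E] [BorelSpace E] [NormedAddCommGroup G] [NormedSpace ℝ G] [Fintype ι]
  (μ : Measure E) {ρ : E → ℝ} {s : Set E} {p : ι → E} {χ : ι → E → ℝ} {M q : ℝ} {f : E → G}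

lemma lintegral_fderiv_goodPart_rpow_le (hq : 1 ≤ q) (hf : ContDiff ℝ 1 f)
    (hχ : IsWhitneyPartition ρ s p M χ) :
    (∫⁻ x, ‖fderiv ℝ (goodPart μ ρ p χ f) x‖ₑ ^ q ∂μ) ^ (1 / q) ≤
      (∫⁻ x, ‖fderiv ℝ f x‖ₑ ^ q ∂μ) ^ (1 / q) +
        (∫⁻ x, (∑ i, ‖fderiv ℝ (badPart μ ρ p χ f i) x‖ₑ) ^ q ∂μ) ^ (1 / q) := by
  have hmeas {h : E → G} (hh : ContDiff ℝ 1 h) : Measurable fun x => ‖fderiv ℝ h x‖ₑ :=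
    (hh.continuous_fderiv one_ne_zero).enorm.measurable
  have hpoint (x : E) : ‖fderiv ℝ (goodPart μ ρ p χ f) x‖ₑ ≤
      ‖fderiv ℝ f x‖ₑ + ∑ i, ‖fderiv ℝ (badPart μ ρ p χ f i) x‖ₑ := by
    rw [fderiv_goodPart_eq_sub_sum μ hf hχ]
    refine (enorm_sub_le (a := fderiv ℝ f x)).trans ?_
    gcongr
    exact enorm_sum_le _ fun i => fderiv ℝ (badPart μ ρ p χ f i) x
  calc (∫⁻ x, ‖fderiv ℝ (goodPart μ ρ p χ f) x‖ₑ ^ q ∂μ) ^ (1 / q)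
      ≤ (∫⁻ x, (‖fderiv ℝ f x‖ₑ + ∑ i, ‖fderiv ℝ (badPart μ ρ p χ f i) x‖ₑ) ^ q ∂μ) ^
          (1 / q) := by
        gcongr with x
        exact hpoint x
    _ ≤ _ := ENNReal.lintegral_Lp_add_le (hmeas hf).aemeasurable
        (Finset.measurable_fun_sum _ fun i _ =>
          hmeas (contDiff_badPart μ hf hχ i)).aemeasurable hq

variable [FiniteDimensional ℝ E]

lemma IsWhitneyCover.sum_indicator_whitneyBall_le (hp : IsWhitneyCover ρ s p) (x : E) :
    ∑ i, (whitneyBall ρ (p i)).indicator (fun _ => (1 : ℝ≥0∞)) x ≤ 220 ^ finrank ℝ E := by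
  classical
  simp only [Set.indicator_apply]
  rw [Finset.sum_boole]
  exact_mod_cast hp.card_filter_mem_le x

variable [μ.IsAddHaarMeasure]

lemma IsWhitneyCover.sum_measure_whitneyBall_le_mul_inv {F : E → ℝ≥0∞} {A : ℝ≥0∞}
    (hp : IsWhitneyCover ρ s p) (hA₀ : A ≠ 0) (hA : A ≠ ∞)
    (hρ : A * μ {x | 0 < ρ x} ≤ 8 ^ finrank ℝ E * ∫⁻ x, F x ∂μ) :
    ∑ i, μ (whitneyBall ρ (p i)) ≤ 80 ^ finrank ℝ E * A⁻¹ * ∫⁻ x, F x ∂μ := by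
  rw [mul_right_comm, ← div_eq_mul_inv, ENNReal.le_div_iff_mul_le (.inl hA₀) (.inl hA), mul_comm]
  calc A * ∑ i, μ (whitneyBall ρ (p i)) ≤ A * (10 ^ finrank ℝ E * μ {x | 0 < ρ x}) := by
        gcongr
        exact hp.sum_measure_whitneyBall_le μ
    _ = 10 ^ finrank ℝ E * (A * μ {x | 0 < ρ x}) := by ring
    _ ≤ 10 ^ finrank ℝ E * (8 ^ finrank ℝ E * ∫⁻ x, F x ∂μ) := by gcongr
    _ = 80 ^ finrank ℝ E * ∫⁻ x, F x ∂μ := by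
        rw [← mul_assoc, ← mul_pow]
        norm_num

variable [CompleteSpace G]

lemma lintegral_sum_fderiv_badPart_rpow_le (hq : 1 ≤ q) (hf : ContDiff ℝ 1 f)
    (hp : IsWhitneyCover ρ s p) (hχ : IsWhitneyPartition ρ s p M χ) :
    (∫⁻ x, (∑ i, ‖fderiv ℝ (badPart μ ρ p χ f i) x‖ₑ) ^ q ∂μ) ^ (1 / q) ≤
      220 ^ finrank ℝ E * cutoffConstant E q M ^ (1 / q) *
        (∫⁻ x, ‖fderiv ℝ f x‖ₑ ^ q ∂μ) ^ (1 / q) := by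
  have hq₀ : 0 < q := one_pos.trans_le hq
  have hmeas {h : E → G} (hh : ContDiff ℝ 1 h) : Measurable fun x => ‖fderiv ℝ h x‖ₑ :=
    (hh.continuous_fderiv one_ne_zero).enorm.measurable
  have hsum := lintegral_sum_rpow_le_of_card_le (μ := μ) hq (fun _ => measurableSet_ball)
    hp.card_filter_mem_le (fun i => hmeas (contDiff_badPart μ hf hχ i))
    (fun i x hx => by
      rw [fderiv_eq_zero_of_notMem_of_tsupport_subset (tsupport_badPart_subset μ hχ i) hx,
        ← ofReal_norm, norm_zero, ENNReal.ofReal_zero])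
    ((hmeas hf).pow_const q) (setLIntegral_fderiv_badPart_rpow_le μ hq hf hp hχ)
  refine (ENNReal.rpow_le_rpow hsum (by positivity)).trans_eq ?_
  rw [ENNReal.mul_rpow_of_nonneg _ _ (by positivity),
    ENNReal.mul_rpow_of_nonneg _ _ (by positivity), ← ENNReal.rpow_mul,
    mul_one_div_cancel hq₀.ne', ENNReal.rpow_one]
  norm_num

lemma setLIntegral_fderiv_badPart_rpow_le_mul_measure (hq : 1 ≤ q) (hf : ContDiff ℝ 1 f)
    (hp : IsWhitneyCover ρ s p) (hχ : IsWhitneyPartition ρ s p M χ) {A : ℝ≥0∞} (i : ι)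
    (hA : ⨍⁻ x in ball (p i) (ρ (p i)), ‖fderiv ℝ f x‖ₑ ^ q ∂μ ≤ A) :
    ∫⁻ x in whitneyBall ρ (p i), ‖fderiv ℝ (badPart μ ρ p χ f i) x‖ₑ ^ q ∂μ ≤
      10 ^ finrank ℝ E * cutoffConstant E q M * A * μ (whitneyBall ρ (p i)) := by
  refine (setLIntegral_fderiv_badPart_rpow_le μ hq hf hp hχ i).trans ?_
  calc cutoffConstant E q M * ∫⁻ x in whitneyBall ρ (p i), ‖fderiv ℝ f x‖ₑ ^ q ∂μ
      ≤ cutoffConstant E q M * (10 ^ finrank ℝ E * A * μ (whitneyBall ρ (p i))) := by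
        gcongr _ * ?_
        exact setLIntegral_whitneyBall_le μ (hp.pos i) hA
    _ = 10 ^ finrank ℝ E * cutoffConstant E q M * A * μ (whitneyBall ρ (p i)) := by ring

end Estimates

section Constant

variable (E : Type*) [NormedAddCommGroup E] [NormedSpace ℝ E] [FiniteDimensional ℝ E] (q : ℝ)

/-- The sum of the constants in the estimates for the bad parts. -/
noncomputable def badPartConstant : ℝ≥0∞ :=
  80 ^ finrank ℝ E + 10 ^ finrank ℝ E * cutoffConstant E q (whitneyGradientBound E) +
    220 ^ finrank ℝ E * cutoffConstant E q (whitneyGradientBound E) ^ (1 / q)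

/-- A constant that serves in all the estimates of the decomposition. -/
noncomputable def decompositionConstant : ℝ :=
  2 + 220 ^ finrank ℝ E * (whitneyGradientBound E * (22 ^ finrank ℝ E * 2)) +
    (badPartConstant E q).toReal

lemma goodPartConstant_le_decompositionConstant :
    2 + 220 ^ finrank ℝ E * (whitneyGradientBound E * (22 ^ finrank ℝ E * 2)) ≤
      decompositionConstant E q :=
  le_add_of_nonneg_right ENNReal.toReal_nonneg

lemma decompositionConstant_pos : 0 < decompositionConstant E q := by
  have := whitneyGradientBound_nonneg E
  exact lt_of_lt_of_le (by positivity) (goodPartConstant_le_decompositionConstant E q)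

variable {q}

lemma badPartConstant_le_ofReal_decompositionConstant (hq : 0 ≤ q) :
    badPartConstant E q ≤ ENNReal.ofReal (decompositionConstant E q) := by
  have hcutoff : cutoffConstant E q (whitneyGradientBound E) ≠ ∞ := by
    unfold cutoffConstant
    finiteness
  have hbad : badPartConstant E q ≠ ∞ := by
    unfold badPartConstant
    finiteness
  have := whitneyGradientBound_nonneg E
  rw [← ENNReal.ofReal_toReal hbad]
  exact ENNReal.ofReal_le_ofReal (le_add_of_nonneg_left (by positivity))

end Constant

section Extend

variable {ι κ β γ δ : Type*} [Zero β] [Zero γ] [Zero δ] {e : ι → κ} {u : ι → β} {v : ι → γ}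
  {w : ι → δ}

lemma forall_extend_zero (he : e.Injective) {P : β → γ → δ → Prop}
    (hP : ∀ i, P (u i) (v i) (w i)) (hP₀ : P 0 0 0) (k : κ) :
    P (Function.extend e u 0 k) (Function.extend e v 0 k) (Function.extend e w 0 k) := by
  rcases em (∃ i, e i = k) with ⟨i, rfl⟩ | hk
  · simpa only [he.extend_apply] using hP i
  · simpa only [Function.extend_apply' _ _ _ hk, Pi.zero_apply] using hP₀

lemma tsum_extend_zero (he : e.Injective) {F : β → γ → δ → ℝ≥0∞} (hF : F 0 0 0 = 0) :
    ∑' k, F (Function.extend e u 0 k) (Function.extend e v 0 k) (Function.extend e w 0 k) =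
      ∑' i, F (u i) (v i) (w i) := by
  rw [← he.tsum_eq]
  · simp only [he.extend_apply]
  · refine fun k hk => by_contra fun hke => hk ?_
    simpa only [Function.extend_apply' _ _ _ hke, Pi.zero_apply] using hF

end Extend

section Decomposition

variable {E G ι : Type*} [NormedAddCommGroup E] [NormedSpace ℝ E] [MeasurableSpace E]
  [NormedAddCommGroup G] [NormedSpace ℝ G]

/-- A Calderón–Zygmund decomposition `f = g + ∑ i, b i` of the Sobolev function `f` at height `α`
with exponent `q`: the good part `g` has gradient of size at most `C * α`, and the bad parts `b i`
live on the balls `ball (c i) (rad i)`, which overlap at most `N` times. The radius `0` is allowed,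
so that a finite decomposition is also one indexed by `ℕ`. -/
structure IsCalderonZygmundDecomposition (μ : Measure E) (q α C : ℝ) (N : ℕ) (f : E → G)
    (c : ι → E) (rad : ι → ℝ) (b : ι → E → G) (g : E → G) : Prop where
  radius_nonneg : ∀ i, 0 ≤ rad i
  hasSum : ∀ x, HasSum (fun i => b i x) (f x - g x)
  contDiff_good : ContDiff ℝ 1 g
  norm_fderiv_good_le : ∀ x, ‖fderiv ℝ g x‖ ≤ C * α
  contDiff_bad : ∀ i, ContDiff ℝ 1 (b i)
  support_bad_subset : ∀ i, Function.support (b i) ⊆ ball (c i) (rad i)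
  setLIntegral_fderiv_bad_le : ∀ i, ∫⁻ x in ball (c i) (rad i), ‖fderiv ℝ (b i) x‖ₑ ^ q ∂μ ≤
    ENNReal.ofReal (C * α ^ q) * μ (ball (c i) (rad i))
  tsum_measure_ball_le : ∑' i, μ (ball (c i) (rad i)) ≤
    ENNReal.ofReal (C * α ^ (-q)) * ∫⁻ x, ‖fderiv ℝ f x‖ₑ ^ q ∂μ
  tsum_indicator_ball_le : ∀ x,
    ∑' i, (ball (c i) (rad i)).indicator (fun _ => (1 : ℝ≥0∞)) x ≤ N
  lintegral_tsum_fderiv_bad_le : (∫⁻ x, (∑' i, ‖fderiv ℝ (b i) x‖ₑ) ^ q ∂μ) ^ (1 / q) ≤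
    ENNReal.ofReal C * (∫⁻ x, ‖fderiv ℝ f x‖ₑ ^ q ∂μ) ^ (1 / q)
  lintegral_fderiv_good_le : (∫⁻ x, ‖fderiv ℝ g x‖ₑ ^ q ∂μ) ^ (1 / q) ≤
    ENNReal.ofReal (C + 1) * (∫⁻ x, ‖fderiv ℝ f x‖ₑ ^ q ∂μ) ^ (1 / q)

theorem IsCalderonZygmundDecomposition.extend {κ : Type*} {μ : Measure E} {q α C : ℝ} {N : ℕ}
    {f g : E → G} {c : ι → E} {rad : ι → ℝ} {b : ι → E → G}
    (h : IsCalderonZygmundDecomposition μ q α C N f c rad b g) {e : ι → κ} (he : e.Injective) :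
    IsCalderonZygmundDecomposition μ q α C N f (Function.extend e c 0) (Function.extend e rad 0)
      (Function.extend e b 0) g where
  radius_nonneg := forall_extend_zero (u := c) (w := b) he (P := fun _ r _ => 0 ≤ r) h.radius_nonneg
    le_rfl
  hasSum x := by
    rw [← he.hasSum_iff]
    · simpa only [Function.comp_def, he.extend_apply] using h.hasSum x
    · intro k hk
      rw [Function.extend_apply' _ _ _ hk]
      rfl
  contDiff_good := h.contDiff_good
  norm_fderiv_good_le := h.norm_fderiv_good_le
  contDiff_bad := forall_extend_zero (u := c) (v := rad) he (P := fun _ _ b => ContDiff ℝ 1 b)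
    h.contDiff_bad contDiff_const
  support_bad_subset := forall_extend_zero he (P := fun c r b => Function.support b ⊆ ball c r)
    h.support_bad_subset (by simp)
  setLIntegral_fderiv_bad_le := forall_extend_zero he
    (P := fun c r b => ∫⁻ x in ball c r, ‖fderiv ℝ b x‖ₑ ^ q ∂μ ≤
      ENNReal.ofReal (C * α ^ q) * μ (ball c r)) h.setLIntegral_fderiv_bad_le (by simp)
  tsum_measure_ball_le :=
    (tsum_extend_zero (w := b) he (F := fun c r _ => μ (ball c r)) (by simp)).trans_le
      h.tsum_measure_ball_le
  tsum_indicator_ball_le x :=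
    (tsum_extend_zero (w := b) he (F := fun c r _ => (ball c r).indicator (fun _ => 1) x)
      (by simp)).trans_le (h.tsum_indicator_ball_le x)
  lintegral_tsum_fderiv_bad_le := by
    have hfderiv (x : E) := tsum_extend_zero (u := c) (v := rad) (w := b) he
      (F := fun _ _ b => ‖fderiv ℝ b x‖ₑ)
      (by rw [fderiv_zero, Pi.zero_apply, ← ofReal_norm, norm_zero, ENNReal.ofReal_zero])
    simpa only [hfderiv] using h.lintegral_tsum_fderiv_bad_le
  lintegral_fderiv_good_le := h.lintegral_fderiv_good_le

variable [FiniteDimensional ℝ E] [BorelSpace E] [CompleteSpace G] {μ : Measure E}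
  [μ.IsAddHaarMeasure] {q α : ℝ} {f : E → G}

theorem IsWhitneyCover.isCalderonZygmundDecomposition [Fintype ι] {ρ : E → ℝ} {ε : ℝ} {p : ι → E}
    {χ : ι → E → ℝ} (hp : IsWhitneyCover ρ {x | ε < ρ x} p)
    (hχ : IsWhitneyPartition ρ {x | ε < ρ x} p (whitneyGradientBound E) χ) (hq : 1 ≤ q)
    (hf : ContDiff ℝ 1 f) (hα : 0 < α) (hε : 0 < ε)
    (hosc : ∀ y z, dist y z < 2 * ε → ‖fderiv ℝ f y - fderiv ℝ f z‖ ≤ α)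
    (hF : ∀ x r, 0 < r → ρ x ≤ r →
      ⨍⁻ y in ball x r, ‖fderiv ℝ f y‖ₑ ^ q ∂μ ≤ ENNReal.ofReal α ^ q)
    (hρ : ENNReal.ofReal α ^ q * μ {x | 0 < ρ x} ≤
      8 ^ finrank ℝ E * ∫⁻ x, ‖fderiv ℝ f x‖ₑ ^ q ∂μ) :
    IsCalderonZygmundDecomposition μ q α (decompositionConstant E q) (220 ^ finrank ℝ E) f p
      (fun i => ρ (p i) / 10) (badPart μ ρ p χ f) (goodPart μ ρ p χ f) := by
  have hq₀ : 0 ≤ q := zero_le_one.trans hq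
  have hA₀ : ENNReal.ofReal α ^ q ≠ 0 :=
    (ENNReal.rpow_pos (ENNReal.ofReal_pos.2 hα) ENNReal.ofReal_ne_top).ne'
  have hA : ENNReal.ofReal α ^ q ≠ ∞ := ENNReal.rpow_ne_top_of_nonneg hq₀ ENNReal.ofReal_ne_top
  have hC₀ : 0 < decompositionConstant E q := decompositionConstant_pos E q
  have hC : badPartConstant E q ≤ ENNReal.ofReal (decompositionConstant E q) :=
    badPartConstant_le_ofReal_decompositionConstant E hq₀
  have hbad := (lintegral_sum_fderiv_badPart_rpow_le μ hq hf hp hχ).trans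
    (mul_le_mul_left (le_add_self.trans hC) _)
  exact
  { radius_nonneg := fun i => by have := hp.pos i; positivity
    hasSum := fun x => by simpa only [goodPart, _root_.sub_sub_cancel] using hasSum_fintype _
    contDiff_good := contDiff_goodPart μ hf hχ
    norm_fderiv_good_le := fun x =>
      (norm_fderiv_goodPart_le μ hq hf hp hχ (whitneyGradientBound_nonneg E) hα.le hε hosc hF
        x).trans (by gcongr; exact goodPartConstant_le_decompositionConstant E q)
    contDiff_bad := contDiff_badPart μ hf hχ
    support_bad_subset := fun i => (subset_tsupport _).trans (tsupport_badPart_subset μ hχ i)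
    setLIntegral_fderiv_bad_le := fun i => by
      refine (setLIntegral_fderiv_badPart_rpow_le_mul_measure μ hq hf hp hχ i
        (hF _ _ (hp.pos i) le_rfl)).trans ?_
      rw [ENNReal.ofReal_mul hC₀.le, ← ENNReal.ofReal_rpow_of_pos hα]
      gcongr
      exact (le_add_self.trans le_self_add).trans hC
    tsum_measure_ball_le := by
      rw [tsum_fintype, ENNReal.ofReal_mul hC₀.le, ← ENNReal.ofReal_rpow_of_pos hα,
        ENNReal.rpow_neg]
      refine (hp.sum_measure_whitneyBall_le_mul_inv μ hA₀ hA hρ).trans ?_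
      gcongr
      exact (le_add_right le_self_add).trans hC
    tsum_indicator_ball_le := fun x => by
      rw [tsum_fintype]
      exact_mod_cast hp.sum_indicator_whitneyBall_le x
    lintegral_tsum_fderiv_bad_le := by simpa only [tsum_fintype] using hbad
    lintegral_fderiv_good_le := by
      refine (lintegral_fderiv_goodPart_rpow_le μ hq hf hχ).trans ?_
      rw [ENNReal.ofReal_add hC₀.le zero_le_one, ENNReal.ofReal_one, add_comm, add_mul, one_mul]
      gcongr }

theorem exists_isCalderonZygmundDecomposition [Nontrivial E] (hq : 1 ≤ q) (hf : ContDiff ℝ 1 f)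
    (hunif : UniformContinuous (fderiv ℝ f)) (hfin : ∫⁻ x, ‖fderiv ℝ f x‖ₑ ^ q ∂μ ≠ ∞)
    (hα : 0 < α) :
    ∃ (c : ℕ → E) (rad : ℕ → ℝ) (b : ℕ → E → G) (g : E → G),
      IsCalderonZygmundDecomposition μ q α (decompositionConstant E q) (220 ^ finrank ℝ E) f
        c rad b g := by
  have hA : ENNReal.ofReal α ^ q ≠ 0 :=
    (ENNReal.rpow_pos (ENNReal.ofReal_pos.2 hα) ENNReal.ofReal_ne_top).ne'
  obtain ⟨R, hR⟩ := exists_stoppingScale_le hA hfin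
  have hmeasure := mul_measure_stoppingScale_pos_le hA hfin
  have hbad : μ {x | 0 < stoppingScale μ (‖fderiv ℝ f ·‖ₑ ^ q) (ENNReal.ofReal α ^ q) x} ≠ ∞ :=
    (ENNReal.lt_top_of_mul_ne_top_right (ne_top_of_le_ne_top (by finiteness) hmeasure) hA).ne
  obtain ⟨δ, hδ, hosc⟩ := Metric.uniformContinuous_iff.1 hunif α hα
  obtain ⟨m, p, hp⟩ := exists_isWhitneyCover μ hR (lipschitzWith_stoppingScale hA hfin) hbad
    (half_pos hδ)
  have hdecomp := hp.isCalderonZygmundDecomposition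
    (hp.isWhitneyPartition (stoppingScale_nonneg _ _ _)) hq hf hα (half_pos hδ)
    (fun y z hyz => by
      rw [← dist_eq_norm]
      exact (hosc (by linarith)).le)
    (fun x r => laverage_ball_le_of_stoppingScale_le hA hfin) hmeasure
  exact ⟨_, _, _, _, hdecomp.extend Fin.val_injective⟩

end Decomposition

lemma lintegral_fderiv_rpow_ne_top_of_hasCompactSupport {E G : Type*} [NormedAddCommGroup E]
    [NormedSpace ℝ E] [MeasurableSpace E] [OpensMeasurableSpace E] [NormedAddCommGroup G]
    [NormedSpace ℝ G] (μ : Measure E) [IsFiniteMeasureOnCompacts μ] {q : ℝ} (hq : 0 < q)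
    {f : E → G} (hf : ContDiff ℝ 1 f) (hcompact : HasCompactSupport f) :
    ∫⁻ x, ‖fderiv ℝ f x‖ₑ ^ q ∂μ ≠ ∞ := by
  have hmem : MemLp (fderiv ℝ f) (ENNReal.ofReal q) μ :=
    (hf.continuous_fderiv one_ne_zero).memLp_of_hasCompactSupport (hcompact.fderiv (𝕜 := ℝ))
  have hlt := lintegral_rpow_enorm_lt_top_of_eLpNorm_lt_top (ENNReal.ofReal_pos.2 hq).ne'
    ENNReal.ofReal_ne_top hmem.eLpNorm_lt_top
  rw [ENNReal.toReal_ofReal hq.le] at hlt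
  exact hlt.ne

end CalderonZygmund

open CalderonZygmund

theorem statement6_general {E G : Type*} [NormedAddCommGroup E] [NormedSpace ℝ E]
    [FiniteDimensional ℝ E] [Nontrivial E] [MeasurableSpace E] [BorelSpace E]
    [NormedAddCommGroup G] [NormedSpace ℝ G] [CompleteSpace G] (μ : Measure E)
    [μ.IsAddHaarMeasure] {q : ℝ} (hq : 1 ≤ q) :
    ∃ (C : ℝ) (N : ℕ), 0 < C ∧ ∀ f : E → G, ContDiff ℝ 1 f → UniformContinuous (fderiv ℝ f) →
      ∫⁻ x, ‖fderiv ℝ f x‖ₑ ^ q ∂μ ≠ ∞ → ∀ α : ℝ, 0 < α →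
      ∃ (c : ℕ → E) (rad : ℕ → ℝ) (b : ℕ → E → G) (g : E → G),
        IsCalderonZygmundDecomposition μ q α C N f c rad b g :=
  ⟨decompositionConstant E q, 220 ^ finrank ℝ E, decompositionConstant_pos E q,
    fun _ hf hunif hfin _ hα => exists_isCalderonZygmundDecomposition hq hf hunif hfin hα⟩

/-- in the Calderón–Zygmund decomposition for Sobolev functions,
one can moreover ensure that `Σᵢ |∇bᵢ|` lies in `L^q` with
`‖Σᵢ |∇bᵢ|‖_q ≤ C ‖|∇f|‖_q` and consequently
`‖|∇g|‖_q ≤ (C+1) ‖|∇f|‖_q`. -/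
theorem statement6 (n : ℕ) (hn : 1 ≤ n) (q : ℝ) (hq1 : 1 ≤ q) :
    ∃ (C : ℝ) (N : ℕ), 0 < C ∧
      ∀ f : EuclideanSpace ℝ (Fin n) → ℝ, ContDiff ℝ (⊤ : ℕ∞) f → HasCompactSupport f →
      ∀ α : ℝ, 0 < α →
      ∃ (c : ℕ → EuclideanSpace ℝ (Fin n)) (rad : ℕ → ℝ)
        (b : ℕ → EuclideanSpace ℝ (Fin n) → ℝ) (g : EuclideanSpace ℝ (Fin n) → ℝ),
        (∀ i, 0 ≤ rad i) ∧
        (∀ᵐ x ∂volume, f x = g x + ∑' i, b i x) ∧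
        (∀ᵐ x ∂volume, DifferentiableAt ℝ g x ∧ ‖fderiv ℝ g x‖ ≤ C * α) ∧
        (∀ i, ContDiff ℝ 1 (b i)) ∧
        (∀ i, Function.support (b i) ⊆ ball (c i) (rad i)) ∧
        (∀ i, ∫⁻ x in ball (c i) (rad i), (‖fderiv ℝ (b i) x‖₊ : ℝ≥0∞) ^ q ≤
          ENNReal.ofReal (C * α ^ q) * volume (ball (c i) (rad i))) ∧
        (∑' i, volume (ball (c i) (rad i)) ≤
          ENNReal.ofReal (C * α ^ (-q)) * ∫⁻ x, (‖fderiv ℝ f x‖₊ : ℝ≥0∞) ^ q) ∧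
        (∀ x, ∑' i, (ball (c i) (rad i)).indicator (fun _ => (1 : ℝ≥0∞)) x ≤ N) ∧
        -- moreover: ‖Σᵢ |∇bᵢ|‖_q ≤ C ‖|∇f|‖_q (in particular Σᵢ ∇bᵢ converges in L^q)
        ((∫⁻ x, (∑' i, (‖fderiv ℝ (b i) x‖₊ : ℝ≥0∞)) ^ q) ^ (1 / q) ≤
          ENNReal.ofReal C * (∫⁻ x, (‖fderiv ℝ f x‖₊ : ℝ≥0∞) ^ q) ^ (1 / q)) ∧
        -- and consequently ‖|∇g|‖_q ≤ (C+1) ‖|∇f|‖_q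
        ((∫⁻ x, (‖fderiv ℝ g x‖₊ : ℝ≥0∞) ^ q) ^ (1 / q) ≤
          ENNReal.ofReal (C + 1) * (∫⁻ x, (‖fderiv ℝ f x‖₊ : ℝ≥0∞) ^ q) ^ (1 / q)) := by
  have : Nonempty (Fin n) := Fin.pos_iff_nonempty.1 hn
  obtain ⟨C, N, hC, hexists⟩ :=
    statement6_general (G := ℝ) (volume : Measure (EuclideanSpace ℝ (Fin n))) hq1
  refine ⟨C, N, hC, fun f hf hcompact α hα => ?_⟩
  have hf₁ : ContDiff ℝ 1 f := hf.of_le (by exact_mod_cast le_top)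
  have hunif : UniformContinuous (fderiv ℝ f) :=
    (hcompact.fderiv (𝕜 := ℝ)).uniformContinuous_of_continuous (hf₁.continuous_fderiv one_ne_zero)
  have hfin : ∫⁻ x, ‖fderiv ℝ f x‖ₑ ^ q ≠ ∞ :=
    lintegral_fderiv_rpow_ne_top_of_hasCompactSupport volume (one_pos.trans_le hq1) hf₁ hcompact
  obtain ⟨c, rad, b, g, h⟩ := hexists f hf₁ hunif hfin α hα
  exact ⟨c, rad, b, g, h.radius_nonneg,
    .of_forall fun x => by rw [(h.hasSum x).tsum_eq, add_sub_cancel],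
    .of_forall fun x => ⟨h.contDiff_good.differentiable one_ne_zero x, h.norm_fderiv_good_le x⟩,
    h.contDiff_bad, h.support_bad_subset, h.setLIntegral_fderiv_bad_le, h.tsum_measure_ball_le,
    h.tsum_indicator_ball_le, h.lintegral_tsum_fderiv_bad_le, h.lintegral_fderiv_good_le⟩
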